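/- There exists a constant c_p > 0 depending only on p such that if ψ̂(0) ≥ c_p·‖ψ‖₂, then there is a constant C > 0 such that the mean of the normalized curvature satisfies |(1/2π)∫₀^{2π} k̃(θ,τ) dθ − 1| ≤ C·e^{−(6p−2)τ} for all sufficiently large τ. -/

import Mathlib

open Real MeasureTheory Filter Set

/-- The `n`-th Fourier coefficient of a `2π`-periodic function `f : ℝ → ℝ`:
`f̂(n) = (1/2π) ∫₀^{2π} f(θ) e^{-inθ} dθ`. -/
noncomputable def fCoeff (f : ℝ → ℝ) (n : ℤ) : ℂ :=
  (1 / (2 * Real.pi)) * ∫ θ in (0:ℝ)..(2 * Real.pi),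
    (f θ : ℂ) * Complex.exp (-(Complex.I * n * θ))

/-- The seminorm `‖f‖₂ = max{sup_n n²|Re f̂(n)|, sup_n n²|Im f̂(n)|}`. -/
noncomputable def seminorm2 (f : ℝ → ℝ) : ℝ :=
  max (⨆ n : ℤ, (n : ℝ)^2 * |(fCoeff f n).re|)
      (⨆ n : ℤ, (n : ℝ)^2 * |(fCoeff f n).im|)

/-- The `C^l[0,2π]` norm: `max_{0 ≤ j ≤ l} sup_{θ ∈ [0,2π]} |f^{(j)}(θ)|`. -/
noncomputable def ClNorm (l : ℕ) (f : ℝ → ℝ) : ℝ :=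
  ⨆ j : Fin (l + 1), ⨆ θ : Set.Icc (0:ℝ) (2 * Real.pi),
    |iteratedDeriv (j : ℕ) f (θ : ℝ)|

/-- `k : ℝ × [0,T) → ℝ` is a smooth, `2π`-periodic (in space), strictly positive solution of the
`p`-curve shortening equation
`∂k/∂t = k²(k^{p-1} ∂²k/∂θ² + (p-1) k^{p-2} (∂k/∂θ)² + (1/p) k^p)`
with initial datum `ψ` (smooth, strictly positive, `2π`-periodic), blow-up time `T`
(i.e. `sup_θ k(θ,t) → ∞` as `t → T⁻`), such that `k(·,t)` is the curvature of a simple closed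
convex curve for each `t`, i.e. `∫₀^{2π} e^{iθ}/k(θ,t) dθ = 0`. -/
def IsPCSF (p : ℕ) (T : ℝ) (k : ℝ → ℝ → ℝ) (ψ : ℝ → ℝ) : Prop :=
  ContDiffOn ℝ (⊤ : ℕ∞) (fun q : ℝ × ℝ => k q.1 q.2) (Set.univ ×ˢ Set.Ico 0 T) ∧
  (∀ θ t, k (θ + 2 * Real.pi) t = k θ t) ∧
  (∀ θ : ℝ, ∀ t ∈ Set.Ico (0:ℝ) T, 0 < k θ t) ∧
  (∀ θ : ℝ, ∀ t ∈ Set.Ico (0:ℝ) T,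
    HasDerivAt (fun s => k θ s)
      ((k θ t)^2 * ((k θ t)^(p - 1) * deriv (deriv (fun x => k x t)) θ
        + ((p : ℝ) - 1) * (k θ t)^(p - 2) * (deriv (fun x => k x t) θ)^2
        + (1 / (p : ℝ)) * (k θ t)^p)) t) ∧
  (∀ θ, k θ 0 = ψ θ) ∧
  ContDiff ℝ (⊤ : ℕ∞) ψ ∧ (∀ θ, 0 < ψ θ) ∧ (∀ θ, ψ (θ + 2 * Real.pi) = ψ θ) ∧
  Filter.Tendsto (fun t => ⨆ θ : Set.Icc (0:ℝ) (2 * Real.pi), k (θ : ℝ) t)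
    (nhdsWithin T (Set.Iio T)) Filter.atTop ∧
  (∀ t ∈ Set.Ico (0:ℝ) T,
    (∫ θ in (0:ℝ)..(2 * Real.pi), Complex.exp (Complex.I * θ) / (k θ t)) = 0)

/-- The original time `t` corresponding to the rescaled time `τ`:
`t = T(1 - e^{-(p+1)τ})`, i.e. `τ = -(1/(p+1))·log(1 - t/T)`. -/
noncomputable def tOf (p : ℕ) (T τ : ℝ) : ℝ := T * (1 - Real.exp (-((p : ℝ) + 1) * τ))

/-- The normalized curvature `k̃(θ,τ) = ((p+1)/p)^{1/(p+1)} (T-t)^{1/(p+1)} k(θ,t)`,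
with `t = T(1 - e^{-(p+1)τ})`. -/
noncomputable def ktilde (p : ℕ) (T : ℝ) (k : ℝ → ℝ → ℝ) (θ τ : ℝ) : ℝ :=
  (((p : ℝ) + 1) / (p : ℝ)) ^ ((1 : ℝ) / ((p : ℝ) + 1))
    * (T - tOf p T τ) ^ ((1 : ℝ) / ((p : ℝ) + 1)) * k θ (tOf p T τ)

/-!
Write `r = 1 / k` for the radius of curvature. It evolves by
`∂r/∂t = r^{-(p+1)} r'' - (p+1) r^{-(p+2)} r'² - (1/p) r^{-p}`. Let `ρ` be the mean of `r`, let
`g = 2π ∫ r'²`, and let `ε = √g / ρ`, which bounds `|r / ρ - 1|`. The closing condition removes the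
Fourier modes `±1` of `r`, so `∫ r''² ≥ 4 ∫ r'²`, and therefore, while `ε` is small,
`g' ≤ ρ^{-(p+1)} (-6 + O(ε)) g` and `ρ' = -(1/p) ρ^{-p} (1 + O(ε²))`.

Hence `g ρ^{-2}` decreases, which keeps `ε` small on all of `[0, T)`; `g ρ^{-4}` decreases, which
gives `ε = O(ρ)`; and with this, `g ρ^{-6p} exp (K ρ)` decreases for a suitable `K`, which gives
`ε² = O(ρ^{6p-2})`. Integrating the equation of `ρ^{p+1}` up to the extinction time shows that `ρ`
agrees with the radius `l` of the shrinking circle, `l^{p+1} = (p+1)/p (T - t)`, to relative order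
`l^{6p-2}`, and the mean of `k` agrees with `1 / ρ` to relative order `ε²`.
-/

section Elementary

lemma inv_le_two_of_abs_sub_one_le {x : ℝ} (hx : |x - 1| ≤ 1 / 2) : x⁻¹ ≤ 2 := by
  have half_le : 1 / 2 ≤ x := by linarith [(abs_le.1 hx).1]
  rw [inv_le_comm₀ (by linarith) two_pos]
  linarith

lemma abs_inv_pow_sub_one_le (n : ℕ) {x : ℝ} (hx : |x - 1| ≤ 1 / 2) :
    |x⁻¹ ^ n - 1| ≤ n * 2 ^ n * |x - 1| := by
  have x_pos : 0 < x := by linarith [(abs_le.1 hx).1]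
  have inv_le := inv_le_two_of_abs_sub_one_le hx
  induction n with
  | zero => simp
  | succ n ih =>
    have step : x⁻¹ ^ (n + 1) - 1 = x⁻¹ * ((x⁻¹ ^ n - 1) - (x - 1)) := by
      linear_combination inv_mul_cancel₀ x_pos.ne'
    have one_le : (1 : ℝ) ≤ 2 ^ n := one_le_pow₀ one_le_two
    calc |x⁻¹ ^ (n + 1) - 1| ≤ 2 * (|x⁻¹ ^ n - 1| + |x - 1|) := by
          rw [step, abs_mul, abs_of_pos (inv_pos.2 x_pos)]
          gcongr
          exact abs_sub _ _
      _ ≤ 2 * (n * 2 ^ n * |x - 1| + 2 ^ n * |x - 1|) := by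
          gcongr
          exact le_mul_of_one_le_left (abs_nonneg _) one_le
      _ = _ := by push_cast; ring

lemma abs_inv_pow_sub_one_add_mul_le (n : ℕ) {x : ℝ} (hx : |x - 1| ≤ 1 / 2) :
    |x⁻¹ ^ n - 1 + n * (x - 1)| ≤ n ^ 2 * 2 ^ n * (x - 1) ^ 2 := by
  have x_pos : 0 < x := by linarith [(abs_le.1 hx).1]
  have inv_le := inv_le_two_of_abs_sub_one_le hx
  induction n with
  | zero => simp
  | succ n ih =>
    have step : x⁻¹ ^ (n + 1) - 1 + ((n + 1 : ℕ) : ℝ) * (x - 1)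
        = x⁻¹ * ((x⁻¹ ^ n - 1 + n * (x - 1)) + (n + 1) * (x - 1) ^ 2) := by
      push_cast
      linear_combination (n + 2 - (n + 1) * x) * inv_mul_cancel₀ x_pos.ne'
    have one_le : (1 : ℝ) ≤ 2 ^ n := one_le_pow₀ one_le_two
    calc |x⁻¹ ^ (n + 1) - 1 + ((n + 1 : ℕ) : ℝ) * (x - 1)|
        ≤ 2 * (|x⁻¹ ^ n - 1 + n * (x - 1)| + |(n + 1) * (x - 1) ^ 2|) := by
          rw [step, abs_mul, abs_of_pos (inv_pos.2 x_pos)]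
          gcongr
          exact abs_add_le _ _
      _ ≤ 2 * (n ^ 2 * 2 ^ n * (x - 1) ^ 2 + (2 * n + 1) * 2 ^ n * (x - 1) ^ 2) := by
          rw [abs_of_nonneg (a := ((n : ℝ) + 1) * (x - 1) ^ 2) (by positivity)]
          have : (n + 1 : ℝ) ≤ (2 * n + 1) * 2 ^ n := by
            nlinarith [(n.cast_nonneg : (0 : ℝ) ≤ n)]
          gcongr
      _ = _ := by push_cast; ring

lemma abs_sub_one_le_abs_pow_succ_sub_one (n : ℕ) {x : ℝ} (hx : 0 ≤ x) :
    |x - 1| ≤ |x ^ (n + 1) - 1| := by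
  have one_le_sum : 1 ≤ ∑ i ∈ Finset.range (n + 1), x ^ i := by
    rw [Finset.sum_range_succ']
    simpa using Finset.sum_nonneg fun i _ => pow_nonneg hx (i + 1)
  rw [← geom_sum_mul, abs_mul]
  exact le_mul_of_one_le_left (abs_nonneg _) (one_le_sum.trans (le_abs_self _))

/- Discriminant of the nonnegative quadratic `s ↦ ∫ (f + s g)²`. -/
lemma sq_integral_mul_le {a b : ℝ} (hab : a ≤ b) {f g : ℝ → ℝ}
    (hf : Continuous f) (hg : Continuous g) :
    (∫ x in a..b, f x * g x) ^ 2 ≤ (∫ x in a..b, f x ^ 2) * ∫ x in a..b, g x ^ 2 := by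
  have quadratic_nonneg (s : ℝ) : 0 ≤ (∫ x in a..b, g x ^ 2) * (s * s)
      + (2 * ∫ x in a..b, f x * g x) * s + ∫ x in a..b, f x ^ 2 := by
    have expand : ∫ x in a..b, (f x + s * g x) ^ 2 = (∫ x in a..b, g x ^ 2) * (s * s)
        + (2 * ∫ x in a..b, f x * g x) * s + ∫ x in a..b, f x ^ 2 := by
      have (x : ℝ) : (f x + s * g x) ^ 2
          = g x ^ 2 * (s * s) + 2 * (f x * g x) * s + f x ^ 2 := by ring
      simp_rw [this]
      rw [intervalIntegral.integral_add, intervalIntegral.integral_add,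
        intervalIntegral.integral_mul_const, intervalIntegral.integral_mul_const,
        intervalIntegral.integral_const_mul]
      all_goals exact Continuous.intervalIntegrable (by fun_prop) _ _
    rw [← expand]
    exact intervalIntegral.integral_nonneg hab fun x _ => sq_nonneg _
  have discrim_le := discrim_le_zero quadratic_nonneg
  rw [discrim] at discrim_le
  linarith

/- At the first time `s` with `c ≤ f s`, the hypothesis gives `f s ≤ f 0 < c`. -/
lemma lt_of_bootstrap {T c : ℝ} {f : ℝ → ℝ} (hf : ContinuousOn f (Ico 0 T)) (h0 : f 0 < c)
    (hstep : ∀ s ∈ Ico 0 T, (∀ t ∈ Ioo 0 s, f t < c) → f s ≤ f 0) :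
    ∀ t ∈ Ico 0 T, f t < c := by
  intro t ht
  by_contra! hc
  let S := {s ∈ Icc 0 t | c ≤ f s}
  have S_closed : IsClosed S :=
    (hf.mono fun s hs => ⟨hs.1, hs.2.trans_lt ht.2⟩).preimage_isClosed_of_isClosed
      isClosed_Icc isClosed_Ici
  have S_bddBelow : BddBelow S := ⟨0, fun s hs => hs.1.1⟩
  have S_nonempty : S.Nonempty := ⟨t, ⟨ht.1, le_rfl⟩, hc⟩
  have first_mem : sInf S ∈ S := S_closed.csInf_mem S_nonempty S_bddBelow
  have lt_of_lt_first (s : ℝ) (hs : s ∈ Ioo 0 (sInf S)) : f s < c := by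
    by_contra! hcs
    exact notMem_of_lt_csInf hs.2 S_bddBelow ⟨⟨hs.1.le, hs.2.le.trans first_mem.1.2⟩, hcs⟩
  have := hstep _ ⟨first_mem.1.1, first_mem.1.2.trans_lt ht.2⟩ lt_of_lt_first
  linarith [first_mem.2]

lemma abs_sub_mul_le_of_tendsto_zero {T a B t : ℝ} {z z' : ℝ → ℝ} (ht : t < T)
    (hz : ContinuousOn z (Ico t T)) (hz' : ∀ s ∈ Ioo t T, HasDerivAt z (z' s) s)
    (hbound : ∀ s ∈ Ioo t T, |z' s + a| ≤ B) (hlim : Tendsto z (nhdsWithin T (Iio T)) (nhds 0)) :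
    |z t - a * (T - t)| ≤ B * (T - t) := by
  have bound_before (s : ℝ) (hs : s ∈ Ioo t T) :
      |z s + a * s - (z t + a * t)| ≤ B * (s - t) := by
    have cont : ContinuousOn (fun u => z u + a * u) (Icc t s) :=
      (hz.mono fun u hu => ⟨hu.1, hu.2.trans_lt hs.2⟩).add (by fun_prop)
    have deriv_at (u : ℝ) (hu : u ∈ Ioo t s) :
        HasDerivAt (fun u => z u + a * u) (z' u + a) u := by
      simpa using (hz' u ⟨hu.1, hu.2.trans hs.2⟩).fun_add ((hasDerivAt_id' u).const_mul a)
    obtain ⟨u, hu, hslope⟩ := exists_hasDerivAt_eq_slope _ _ hs.1 cont deriv_at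
    have pos : 0 < s - t := sub_pos.2 hs.1
    have := hbound u ⟨hu.1, hu.2.trans hs.2⟩
    rwa [hslope, abs_div, abs_of_pos pos, div_le_iff₀ pos] at this
  have lim_id : Tendsto (fun s : ℝ => s) (nhdsWithin T (Iio T)) (nhds T) :=
    tendsto_id.mono_left nhdsWithin_le_nhds
  have lim_left : Tendsto (fun s => |z s + a * s - (z t + a * t)|) (nhdsWithin T (Iio T))
      (nhds |0 + a * T - (z t + a * t)|) :=
    ((hlim.add (lim_id.const_mul a)).sub_const _).abs
  have := le_of_tendsto_of_tendsto lim_left ((lim_id.sub_const t).const_mul B)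
    (Filter.mem_of_superset (Ioo_mem_nhdsLT ht) bound_before)
  rwa [abs_sub_comm, show z t + a * t - (0 + a * T) = z t - a * (T - t) by ring] at this

end Elementary

section Fourier

lemma periodic_deriv {f : ℝ → ℝ} {c : ℝ} (hf : Function.Periodic f c) :
    Function.Periodic (deriv f) c := fun x => by
  rw [← deriv_comp_add_const, funext hf]

lemma integral_deriv_eq_zero {f : ℝ → ℝ} (hf : ContDiff ℝ 1 f)
    (hper : Function.Periodic f (2 * π)) : ∫ θ in (0 : ℝ)..2 * π, deriv f θ = 0 := by
  rw [intervalIntegral.integral_deriv_eq_sub (fun x _ => hf.differentiable one_ne_zero x)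
    ((hf.continuous_deriv le_rfl).intervalIntegrable _ _), sub_eq_zero]
  simpa using hper 0

lemma fourierCoeffOn_eq_fCoeff (f : ℝ → ℝ) (n : ℤ) :
    fourierCoeffOn Real.two_pi_pos (fun x => (f x : ℂ)) n = fCoeff f n := by
  rw [fourierCoeffOn_eq_integral, fCoeff]
  simp only [sub_zero, smul_eq_mul, Complex.real_smul]
  congr 1
  · push_cast; rfl
  · refine intervalIntegral.integral_congr fun x _ => ?_
    have pi_ne : (π : ℂ) ≠ 0 := by exact_mod_cast Real.pi_ne_zero
    simp only [fourier_coe_apply, mul_comm (f x : ℂ)]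
    congr 2
    push_cast
    field_simp
    ring

lemma hasSum_sq_norm_fCoeff {f : ℝ → ℝ} (hf : Continuous f) :
    HasSum (fun n : ℤ => ‖fCoeff f n‖ ^ 2) (1 / (2 * π) * ∫ x in (0 : ℝ)..2 * π, f x ^ 2) := by
  have memLp : MemLp (fun x => (f x : ℂ)) 2 (volume.restrict (Ioc 0 (2 * π))) := by
    have hc : Continuous fun x => (f x : ℂ) := by fun_prop
    obtain ⟨C, hC⟩ := (isCompact_Icc (a := (0 : ℝ)) (b := 2 * π)).exists_bound_of_continuousOn
      hc.continuousOn
    exact MemLp.of_bound hc.aestronglyMeasurable C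
      ((ae_restrict_iff' measurableSet_Ioc).2
        (Eventually.of_forall fun x hx => hC x (Ioc_subset_Icc_self hx)))
  simpa [fourierCoeffOn_eq_fCoeff] using hasSum_sq_fourierCoeffOn Real.two_pi_pos memLp

lemma fCoeff_deriv {f : ℝ → ℝ} (hf : ContDiff ℝ 1 f) (hper : Function.Periodic f (2 * π))
    (n : ℤ) : fCoeff (deriv f) n = Complex.I * n * fCoeff f n := by
  have hasDeriv (x : ℝ) : HasDerivAt f (deriv f x) x :=
    (hf.differentiable one_ne_zero x).hasDerivAt
  have : Continuous (deriv f) := hf.continuous_deriv le_rfl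
  have endpoints : f (2 * π) = f 0 := by simpa using hper 0
  rcases eq_or_ne n 0 with rfl | hn
  · simp [fCoeff, intervalIntegral.integral_ofReal, integral_deriv_eq_zero hf hper]
  · have by_parts := fourierCoeffOn_of_hasDerivAt Real.two_pi_pos (f := fun x => (f x : ℂ))
      (f' := fun x => ((deriv f x : ℝ) : ℂ)) hn (fun x _ => (hasDeriv x).ofReal_comp)
      (Continuous.intervalIntegrable (by fun_prop) _ _)
    rw [fourierCoeffOn_eq_fCoeff, fourierCoeffOn_eq_fCoeff, endpoints, sub_self, mul_zero,
      zero_sub] at by_parts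
    have pi_ne : (π : ℂ) ≠ 0 := by exact_mod_cast Real.pi_ne_zero
    have n_ne : (n : ℂ) ≠ 0 := by exact_mod_cast hn
    rw [by_parts]
    push_cast
    field_simp
    ring

lemma norm_fCoeff_deriv {f : ℝ → ℝ} (hf : ContDiff ℝ 1 f) (hper : Function.Periodic f (2 * π))
    (n : ℤ) : ‖fCoeff (deriv f) n‖ = |(n : ℝ)| * ‖fCoeff f n‖ := by
  simp [fCoeff_deriv hf hper]

lemma fCoeff_neg (f : ℝ → ℝ) (n : ℤ) : fCoeff f (-n) = starRingEnd ℂ (fCoeff f n) := by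
  rw [fCoeff, fCoeff, map_mul, ← intervalIntegral.intervalIntegral_conj]
  simp [← Complex.exp_conj, map_ofNat]

lemma norm_fCoeff_le {f : ℝ → ℝ} (hf : Continuous f) (n : ℤ) :
    ‖fCoeff f n‖ ≤ √(1 / (2 * π) * ∫ x in (0 : ℝ)..2 * π, f x ^ 2) :=
  Real.le_sqrt_of_sq_le (le_hasSum (hasSum_sq_norm_fCoeff hf) n fun _ _ => sq_nonneg _)

/- The case `N = 1` is the Wirtinger inequality. -/
lemma sq_mul_integral_sq_le_integral_deriv_sq {f : ℝ → ℝ} (hf : ContDiff ℝ 1 f)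
    (hper : Function.Periodic f (2 * π)) {N : ℕ} (hN : ∀ n : ℤ, |n| < N → fCoeff f n = 0) :
    (N : ℝ) ^ 2 * ∫ x in (0 : ℝ)..2 * π, f x ^ 2 ≤ ∫ x in (0 : ℝ)..2 * π, deriv f x ^ 2 := by
  have coeff_le (n : ℤ) : (N : ℝ) ^ 2 * ‖fCoeff f n‖ ^ 2 ≤ ‖fCoeff (deriv f) n‖ ^ 2 := by
    rw [norm_fCoeff_deriv hf hper, mul_pow]
    rcases lt_or_ge |n| (N : ℤ) with hn | hn
    · simp [hN n hn]
    · have : (N : ℝ) ≤ |(n : ℝ)| := by exact_mod_cast hn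
      gcongr
  have sum_le := hasSum_le coeff_le ((hasSum_sq_norm_fCoeff hf.continuous).mul_left _)
    (hasSum_sq_norm_fCoeff (hf.continuous_deriv le_rfl))
  rw [mul_left_comm] at sum_le
  exact le_of_mul_le_mul_left sum_le (by positivity)

lemma bddAbove_sq_mul_norm_fCoeff {f : ℝ → ℝ} (hf : ContDiff ℝ 2 f)
    (hper : Function.Periodic f (2 * π)) :
    BddAbove (range fun n : ℤ => (n : ℝ) ^ 2 * ‖fCoeff f n‖) := by
  have hf' : ContDiff ℝ 1 (deriv f) := hf.deriv'
  refine ⟨√(1 / (2 * π) * ∫ x in (0 : ℝ)..2 * π, deriv (deriv f) x ^ 2),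
    forall_mem_range.2 fun n => ?_⟩
  rw [← sq_abs, sq, mul_assoc, ← norm_fCoeff_deriv (hf.of_le one_le_two) hper,
    ← norm_fCoeff_deriv hf' (periodic_deriv hper)]
  exact norm_fCoeff_le (hf'.continuous_deriv le_rfl) n

lemma sq_mul_norm_fCoeff_le_seminorm2 {f : ℝ → ℝ} (hf : ContDiff ℝ 2 f)
    (hper : Function.Periodic f (2 * π)) (n : ℤ) :
    (n : ℝ) ^ 2 * ‖fCoeff f n‖ ≤ 2 * seminorm2 f := by
  have bdd := bddAbove_sq_mul_norm_fCoeff hf hper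
  have bdd_re : BddAbove (range fun n : ℤ => (n : ℝ) ^ 2 * |(fCoeff f n).re|) :=
    bdd.range_mono _ fun n => by gcongr; exact Complex.abs_re_le_norm _
  have bdd_im : BddAbove (range fun n : ℤ => (n : ℝ) ^ 2 * |(fCoeff f n).im|) :=
    bdd.range_mono _ fun n => by gcongr; exact Complex.abs_im_le_norm _
  calc (n : ℝ) ^ 2 * ‖fCoeff f n‖
      ≤ (n : ℝ) ^ 2 * |(fCoeff f n).re| + (n : ℝ) ^ 2 * |(fCoeff f n).im| := by
        rw [← mul_add]
        gcongr
        exact Complex.norm_le_abs_re_add_abs_im _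
    _ ≤ seminorm2 f + seminorm2 f :=
        add_le_add ((le_ciSup bdd_re n).trans (le_max_left _ _))
          ((le_ciSup bdd_im n).trans (le_max_right _ _))
    _ = 2 * seminorm2 f := by ring

end Fourier

section Oscillation

/-- The mean of a `2π`-periodic function over one period. -/
noncomputable def periodMean (f : ℝ → ℝ) : ℝ := 1 / (2 * π) * ∫ x in (0 : ℝ)..2 * π, f x

/-- The Dirichlet energy of `f` over one period, scaled by the length `2π` of the period so that
its square root bounds the deviation of `f` from its mean. -/
noncomputable def oscEnergy (f : ℝ → ℝ) : ℝ := 2 * π * ∫ x in (0 : ℝ)..2 * π, deriv f x ^ 2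

/-- The oscillation of a positive periodic function relative to its mean: the small quantity of
the whole argument. -/
noncomputable def relOsc (f : ℝ → ℝ) : ℝ := √(oscEnergy f) / periodMean f

lemma oscEnergy_nonneg (f : ℝ → ℝ) : 0 ≤ oscEnergy f :=
  mul_nonneg two_pi_pos.le (intervalIntegral.integral_nonneg two_pi_pos.le fun _ _ => sq_nonneg _)

lemma sqrt_oscEnergy_le_seminorm2 {f : ℝ → ℝ} (hf : ContDiff ℝ 2 f)
    (hper : Function.Periodic f (2 * π)) :
    √(oscEnergy f) ≤ 4 * π * √(∑' n : ℤ, 1 / (n : ℝ) ^ 2) * seminorm2 f := by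
  have coeff_le (n : ℤ) :
      ‖fCoeff (deriv f) n‖ ^ 2 ≤ (2 * seminorm2 f) ^ 2 * (1 / (n : ℝ) ^ 2) := by
    rw [norm_fCoeff_deriv (hf.of_le one_le_two) hper]
    rcases eq_or_ne n 0 with rfl | hn
    · simp
    have sq_pos : 0 < (n : ℝ) ^ 2 := by positivity
    rw [mul_one_div, le_div_iff₀ sq_pos]
    calc (|(n : ℝ)| * ‖fCoeff f n‖) ^ 2 * (n : ℝ) ^ 2 = ((n : ℝ) ^ 2 * ‖fCoeff f n‖) ^ 2 := by
          rw [mul_pow, sq_abs]; ring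
      _ ≤ (2 * seminorm2 f) ^ 2 :=
          pow_le_pow_left₀ (by positivity) (sq_mul_norm_fCoeff_le_seminorm2 hf hper n) 2
  have sum_le := hasSum_le coeff_le
    (hasSum_sq_norm_fCoeff (hf.continuous_deriv one_le_two))
    ((Real.summable_one_div_int_pow.2 one_lt_two).hasSum.mul_left _)
  have seminorm_nonneg : 0 ≤ seminorm2 f := by
    simpa using sq_mul_norm_fCoeff_le_seminorm2 hf hper 0
  refine Real.sqrt_le_iff.2 ⟨by positivity, ?_⟩
  rw [mul_pow, mul_pow, Real.sq_sqrt (tsum_nonneg fun n => by positivity), oscEnergy]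
  rw [one_div, inv_mul_le_iff₀ two_pi_pos] at sum_le
  linarith [mul_le_mul_of_nonneg_left sum_le two_pi_pos.le]

lemma integral_eq_periodMean (f : ℝ → ℝ) :
    ∫ x in (0 : ℝ)..2 * π, f x = 2 * π * periodMean f := by
  rw [periodMean]
  field_simp

lemma periodMean_pos {f : ℝ → ℝ} (hf : Continuous f) (hpos : ∀ x, 0 < f x) :
    0 < periodMean f :=
  mul_pos (by positivity) (intervalIntegral.intervalIntegral_pos_of_pos
    (hf.intervalIntegrable _ _) hpos two_pi_pos)

lemma sq_sub_le_oscEnergy {f : ℝ → ℝ} (hf : ContDiff ℝ 1 f) {a b : ℝ}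
    (ha : a ∈ Icc 0 (2 * π)) (hb : b ∈ Icc 0 (2 * π)) : (f b - f a) ^ 2 ≤ oscEnergy f := by
  wlog hab : a ≤ b generalizing a b
  · rw [← neg_sub, neg_sq]
    exact this hb ha (le_of_not_ge hab)
  have cont : Continuous (deriv f) := hf.continuous_deriv le_rfl
  rw [← intervalIntegral.integral_deriv_eq_sub
    (fun x _ => hf.differentiable one_ne_zero x) (cont.intervalIntegrable a b)]
  have cauchy_schwarz := sq_integral_mul_le hab (f := fun _ => 1) continuous_const cont
  simp only [one_mul, one_pow, intervalIntegral.integral_const, smul_eq_mul, mul_one]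
    at cauchy_schwarz
  have integral_le : ∫ x in a..b, deriv f x ^ 2 ≤ ∫ x in (0 : ℝ)..2 * π, deriv f x ^ 2 :=
    intervalIntegral.integral_mono_interval ha.1 hab hb.2
      (Eventually.of_forall fun x => sq_nonneg _)
      (Continuous.intervalIntegrable (by fun_prop) _ _)
  refine cauchy_schwarz.trans (mul_le_mul (by linarith [ha.1, hb.2]) integral_le ?_ two_pi_pos.le)
  exact intervalIntegral.integral_nonneg hab fun x _ => sq_nonneg _

lemma abs_sub_periodMean_le {f : ℝ → ℝ} (hf : ContDiff ℝ 1 f)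
    (hper : Function.Periodic f (2 * π)) (x : ℝ) : |f x - periodMean f| ≤ √(oscEnergy f) := by
  obtain ⟨y, hy, hxy⟩ := hper.exists_mem_Ico₀ two_pi_pos x
  obtain ⟨c, hc, hmean⟩ : ∃ c ∈ Icc 0 (2 * π), f c = periodMean f := by
    obtain ⟨c, hc, hmean⟩ :=
      exists_eq_interval_average (a := 0) (b := 2 * π) two_pi_pos.ne hf.continuous.continuousOn
    rw [uIoo_of_le two_pi_pos.le] at hc
    refine ⟨c, Ioo_subset_Icc_self hc, hmean.trans ?_⟩
    rw [interval_average_eq, sub_zero, smul_eq_mul, periodMean, one_div]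
  rw [hxy, ← hmean, ← Real.sqrt_sq_eq_abs]
  exact Real.sqrt_le_sqrt (sq_sub_le_oscEnergy hf hc (Ico_subset_Icc_self hy))

lemma abs_div_periodMean_sub_one_le {f : ℝ → ℝ} (hf : ContDiff ℝ 1 f)
    (hper : Function.Periodic f (2 * π)) (hmean : 0 < periodMean f) (x : ℝ) :
    |f x / periodMean f - 1| ≤ relOsc f := by
  rw [div_sub_one hmean.ne', abs_div, abs_of_pos hmean, relOsc]
  gcongr
  exact abs_sub_periodMean_le hf hper x

end Oscillation

section SmallOscillation

variable {f : ℝ → ℝ}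

lemma abs_inv_pow_sub_periodMean_inv_pow_le (hf : ContDiff ℝ 1 f)
    (hper : Function.Periodic f (2 * π)) (hmean : 0 < periodMean f) (hosc : relOsc f ≤ 1 / 2)
    (n : ℕ) (x : ℝ) :
    |(f x)⁻¹ ^ n - (periodMean f)⁻¹ ^ n| ≤ n * 2 ^ n * relOsc f * (periodMean f)⁻¹ ^ n := by
  have close := abs_div_periodMean_sub_one_le hf hper hmean x
  have factor : (f x)⁻¹ ^ n - (periodMean f)⁻¹ ^ n
      = ((f x / periodMean f)⁻¹ ^ n - 1) * (periodMean f)⁻¹ ^ n := by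
    rw [sub_mul, one_mul, ← mul_pow]
    field_simp
  rw [factor, abs_mul, abs_of_pos (a := (periodMean f)⁻¹ ^ n) (by positivity)]
  gcongr
  exact (abs_inv_pow_sub_one_le n (close.trans hosc)).trans (by gcongr)

lemma inv_pow_le_two_pow_mul (hf : ContDiff ℝ 1 f) (hper : Function.Periodic f (2 * π))
    (hpos : ∀ x, 0 < f x) (hosc : relOsc f ≤ 1 / 2) (n : ℕ) (x : ℝ) :
    (f x)⁻¹ ^ n ≤ 2 ^ n * (periodMean f)⁻¹ ^ n := by
  have hmean := periodMean_pos hf.continuous hpos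
  have close := abs_div_periodMean_sub_one_le hf hper hmean x
  have inv_le := inv_le_two_of_abs_sub_one_le (close.trans hosc)
  rw [← mul_pow]
  refine pow_le_pow_left₀ (inv_pos.2 (hpos x)).le ?_ n
  calc (f x)⁻¹ = (f x / periodMean f)⁻¹ * (periodMean f)⁻¹ := by field_simp
    _ ≤ 2 * (periodMean f)⁻¹ := by gcongr

lemma continuous_inv_of_pos (hf : Continuous f) (hpos : ∀ x, 0 < f x) :
    Continuous fun x => (f x)⁻¹ :=
  hf.inv₀ fun x => (hpos x).ne'

/- The first-order term `-n (f / mean - 1)` of `(f / mean)⁻ⁿ` integrates to zero, so the error is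
quadratic in the oscillation. -/
lemma abs_periodMean_inv_pow_sub_le (hf : ContDiff ℝ 1 f) (hper : Function.Periodic f (2 * π))
    (hpos : ∀ x, 0 < f x) (hosc : relOsc f ≤ 1 / 2) (n : ℕ) :
    |periodMean (fun x => (f x)⁻¹ ^ n) - (periodMean f)⁻¹ ^ n|
      ≤ n ^ 2 * 2 ^ n * relOsc f ^ 2 * (periodMean f)⁻¹ ^ n := by
  have hmean := periodMean_pos hf.continuous hpos
  have cont_f : Continuous f := hf.continuous
  have cont_inv := continuous_inv_of_pos hf.continuous hpos
  set ρ := periodMean f with ρ_def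
  let remainder (x : ℝ) := (f x)⁻¹ ^ n - ρ⁻¹ ^ n + n * ρ⁻¹ ^ n * (f x / ρ - 1)
  have remainder_le (x : ℝ) :
      ‖remainder x‖ ≤ n ^ 2 * 2 ^ n * relOsc f ^ 2 * ρ⁻¹ ^ n := by
    have close := abs_div_periodMean_sub_one_le hf hper hmean x
    have factor : remainder x = ((f x / ρ)⁻¹ ^ n - 1 + n * (f x / ρ - 1)) * ρ⁻¹ ^ n := by
      have : (f x)⁻¹ ^ n = (f x / ρ)⁻¹ ^ n * ρ⁻¹ ^ n := by
        rw [← mul_pow]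
        field_simp
      simp only [remainder, this]
      ring
    rw [factor, Real.norm_eq_abs, abs_mul, abs_of_pos (a := ρ⁻¹ ^ n) (by positivity)]
    gcongr
    refine (abs_inv_pow_sub_one_add_mul_le n (close.trans hosc)).trans ?_
    gcongr ?_ * ?_
    exact sq_le_sq.2 (close.trans (le_abs_self _))
  have integral_remainder : ∫ x in (0 : ℝ)..2 * π, remainder x
      = 2 * π * (periodMean (fun x => (f x)⁻¹ ^ n) - ρ⁻¹ ^ n) := by
    simp only [remainder]
    rw [intervalIntegral.integral_add, intervalIntegral.integral_sub,
      intervalIntegral.integral_const_mul, intervalIntegral.integral_sub,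
      intervalIntegral.integral_div, integral_eq_periodMean f, integral_eq_periodMean, ← ρ_def,
      mul_div_cancel_right₀ _ hmean.ne']
    · simp
      ring
    all_goals exact Continuous.intervalIntegrable (by fun_prop) _ _
  have integral_le := intervalIntegral.norm_integral_le_of_norm_le_const (a := 0) (b := 2 * π)
    fun x _ => remainder_le x
  rw [integral_remainder, Real.norm_eq_abs, abs_mul, sub_zero, abs_of_pos two_pi_pos,
    mul_comm] at integral_le
  exact le_of_mul_le_mul_right integral_le two_pi_pos

lemma abs_integral_inv_pow_mul_sub_le (hf : ContDiff ℝ 1 f) (hper : Function.Periodic f (2 * π))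
    (hpos : ∀ x, 0 < f x) (hosc : relOsc f ≤ 1 / 2) (n : ℕ) {w : ℝ → ℝ} (hw : Continuous w)
    (hw_nonneg : ∀ x, 0 ≤ w x) :
    |(∫ x in (0 : ℝ)..2 * π, (f x)⁻¹ ^ n * w x)
        - (periodMean f)⁻¹ ^ n * ∫ x in (0 : ℝ)..2 * π, w x|
      ≤ n * 2 ^ n * relOsc f * (periodMean f)⁻¹ ^ n * ∫ x in (0 : ℝ)..2 * π, w x := by
  have hmean := periodMean_pos hf.continuous hpos
  have cont_inv := continuous_inv_of_pos hf.continuous hpos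
  rw [← intervalIntegral.integral_const_mul, ← intervalIntegral.integral_const_mul,
    ← intervalIntegral.integral_sub (Continuous.intervalIntegrable (by fun_prop) _ _)
      (Continuous.intervalIntegrable (by fun_prop) _ _), ← Real.norm_eq_abs]
  refine intervalIntegral.norm_integral_le_of_norm_le two_pi_pos.le
    (Eventually.of_forall fun x _ => ?_) (Continuous.intervalIntegrable (by fun_prop) _ _)
  rw [← sub_mul, Real.norm_eq_abs, abs_mul, abs_of_nonneg (hw_nonneg x)]
  exact mul_le_mul_of_nonneg_right
    (abs_inv_pow_sub_periodMean_inv_pow_le hf hper hmean hosc n x) (hw_nonneg x)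

end SmallOscillation

section Dissipation

/-- The speed of the radius of curvature `r = 1 / k` under `p`-curve shortening, so that the flow
reads `∂r/∂t = radiusSpeed p r`. -/
noncomputable def radiusSpeed (p : ℕ) (r : ℝ → ℝ) (θ : ℝ) : ℝ :=
  (r θ)⁻¹ ^ (p + 1) * deriv (deriv r) θ - (p + 1) * (r θ)⁻¹ ^ (p + 2) * deriv r θ ^ 2
    - 1 / p * (r θ)⁻¹ ^ p

/-- `r` is the radius of curvature, as a function of the normal angle, of a closed convex curve. -/
structure IsConvexRadius (r : ℝ → ℝ) : Prop where
  contDiff : ContDiff ℝ 2 r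
  periodic : Function.Periodic r (2 * π)
  pos : ∀ θ, 0 < r θ
  closed : ∫ θ in (0 : ℝ)..2 * π, Complex.exp (Complex.I * θ) * r θ = 0

/-- A constant large enough for all perturbation estimates of the flow about a circle. -/
noncomputable def perturbConst (p : ℕ) : ℝ := 26 * (p + 1) ^ 2 * 2 ^ (p + 1)

lemma one_le_perturbConst (p : ℕ) : 1 ≤ perturbConst p := by
  have : (1 : ℝ) ≤ (p + 1) ^ 2 := one_le_pow₀ (by simp)
  have : (1 : ℝ) ≤ 2 ^ (p + 1) := one_le_pow₀ one_le_two
  rw [perturbConst]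
  nlinarith

lemma mul_two_pow_le_perturbConst (p : ℕ) : 26 * ((p + 1) * 2 ^ (p + 1)) ≤ perturbConst p := by
  rw [perturbConst, ← mul_assoc]
  gcongr
  exact le_self_pow₀ (by simp) two_ne_zero

lemma sq_mul_two_pow_le_perturbConst (p : ℕ) : (p : ℝ) ^ 2 * 2 ^ p ≤ perturbConst p := by
  have sq_le : (p : ℝ) ^ 2 ≤ 26 * (p + 1) ^ 2 := by nlinarith [(p.cast_nonneg : (0 : ℝ) ≤ p)]
  exact mul_le_mul sq_le (pow_le_pow_right₀ one_le_two p.le_succ) (by positivity) (by positivity)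

lemma relOsc_le_of_perturbConst_mul_le {p : ℕ} {f : ℝ → ℝ}
    (hsmall : perturbConst p * relOsc f ≤ 1 / 8) : relOsc f ≤ 1 / 2 := by
  nlinarith [one_le_perturbConst p]

lemma integral_deriv_sq_mul_abs_le {f : ℝ → ℝ} (hf : ContDiff ℝ 2 f)
    (hper : Function.Periodic f (2 * π)) :
    ∫ θ in (0 : ℝ)..2 * π, deriv f θ ^ 2 * |deriv (deriv f) θ|
      ≤ √(oscEnergy f) * ∫ θ in (0 : ℝ)..2 * π, deriv (deriv f) θ ^ 2 := by
  have hf' : ContDiff ℝ 1 (deriv f) := hf.deriv'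
  have cont' : Continuous (deriv f) := hf'.continuous
  have cont'' : Continuous (deriv (deriv f)) := hf'.continuous_deriv le_rfl
  set A := ∫ θ in (0 : ℝ)..2 * π, deriv (deriv f) θ ^ 2 with A_def
  set G := ∫ θ in (0 : ℝ)..2 * π, deriv f θ ^ 2
  have A_nonneg : 0 ≤ A := intervalIntegral.integral_nonneg two_pi_pos.le fun _ _ => sq_nonneg _
  have deriv_le (x : ℝ) : |deriv f x| ≤ √(oscEnergy (deriv f)) := by
    have := abs_sub_periodMean_le hf' (periodic_deriv hper) x
    rwa [periodMean, integral_deriv_eq_zero (hf.of_le one_le_two) hper, mul_zero, sub_zero] at this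
  have cauchy_schwarz : ∫ θ in (0 : ℝ)..2 * π, |deriv f θ| * |deriv (deriv f) θ| ≤ √(G * A) := by
    refine Real.le_sqrt_of_sq_le ?_
    simpa only [sq_abs] using sq_integral_mul_le two_pi_pos.le cont'.abs cont''.abs
  calc ∫ θ in (0 : ℝ)..2 * π, deriv f θ ^ 2 * |deriv (deriv f) θ|
      ≤ ∫ θ in (0 : ℝ)..2 * π, √(oscEnergy (deriv f)) * (|deriv f θ| * |deriv (deriv f) θ|) := by
        refine intervalIntegral.integral_mono two_pi_pos.le
          (Continuous.intervalIntegrable (by fun_prop) _ _)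
          (Continuous.intervalIntegrable (by fun_prop) _ _) fun θ => ?_
        simp only [← sq_abs (deriv f θ), sq |deriv f θ|, mul_assoc]
        gcongr
        exact deriv_le θ
    _ ≤ √(oscEnergy (deriv f)) * √(G * A) := by
        rw [intervalIntegral.integral_const_mul]
        gcongr
    _ = √(2 * π * G) * √(A ^ 2) := by
        rw [oscEnergy, ← A_def, ← Real.sqrt_mul (by positivity), ← Real.sqrt_mul' _ (sq_nonneg A)]
        ring_nf
    _ = √(oscEnergy f) * A := by rw [Real.sqrt_sq A_nonneg, oscEnergy]

variable {r : ℝ → ℝ}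

lemma integral_inv_pow_mul_deriv_deriv (hr : ContDiff ℝ 2 r)
    (hper : Function.Periodic r (2 * π)) (hpos : ∀ θ, 0 < r θ) (n : ℕ) :
    ∫ θ in (0 : ℝ)..2 * π, (r θ)⁻¹ ^ n * deriv (deriv r) θ
      = n * ∫ θ in (0 : ℝ)..2 * π, (r θ)⁻¹ ^ (n + 1) * deriv r θ ^ 2 := by
  have hr' : ContDiff ℝ 1 (deriv r) := hr.deriv'
  have cont_inv := continuous_inv_of_pos hr.continuous hpos
  have cont' : Continuous (deriv r) := hr'.continuous
  have hasDeriv_inv_pow (θ : ℝ) : HasDerivAt (fun θ => (r θ)⁻¹ ^ n)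
      (-(n * ((r θ)⁻¹ ^ (n + 1) * deriv r θ))) θ := by
    have := (((hr.differentiable two_ne_zero θ).hasDerivAt.fun_inv (hpos θ).ne').fun_pow n)
    refine this.congr_deriv ?_
    rcases n with _ | n
    · simp
    · rw [div_eq_mul_inv, ← inv_pow]
      push_cast
      ring
  rw [intervalIntegral.integral_mul_deriv_eq_deriv_mul (fun θ _ => hasDeriv_inv_pow θ)
    (fun θ _ => (hr'.differentiable one_ne_zero θ).hasDerivAt)
    (Continuous.intervalIntegrable (by fun_prop) _ _)
    ((hr'.continuous_deriv le_rfl).intervalIntegrable _ _),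
    hper.eq, (periodic_deriv hper).eq, sub_self, zero_sub,
    ← intervalIntegral.integral_neg, ← intervalIntegral.integral_const_mul]
  exact intervalIntegral.integral_congr fun θ _ => by ring

lemma integral_radiusSpeed (hr : ContDiff ℝ 2 r) (hper : Function.Periodic r (2 * π))
    (hpos : ∀ θ, 0 < r θ) (p : ℕ) :
    ∫ θ in (0 : ℝ)..2 * π, radiusSpeed p r θ
      = -(1 / p * ∫ θ in (0 : ℝ)..2 * π, (r θ)⁻¹ ^ p) := by
  have cont_inv := continuous_inv_of_pos hr.continuous hpos
  have cont' : Continuous (deriv r) := hr.continuous_deriv one_le_two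
  have : Continuous (deriv (deriv r)) := hr.deriv'.continuous_deriv le_rfl
  have parts := integral_inv_pow_mul_deriv_deriv hr hper hpos (p + 1)
  push_cast at parts
  simp only [radiusSpeed, mul_assoc]
  rw [intervalIntegral.integral_sub, intervalIntegral.integral_sub,
    intervalIntegral.integral_const_mul, intervalIntegral.integral_const_mul, parts, sub_self,
    zero_sub]
  all_goals exact Continuous.intervalIntegrable (by fun_prop) _ _

lemma abs_periodMean_radiusSpeed_add_le {p : ℕ} (hr : ContDiff ℝ 2 r)
    (hper : Function.Periodic r (2 * π)) (hpos : ∀ θ, 0 < r θ)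
    (hsmall : perturbConst p * relOsc r ≤ 1 / 8) :
    |periodMean (radiusSpeed p r) + 1 / p * (periodMean r)⁻¹ ^ p|
      ≤ perturbConst p * relOsc r ^ 2 * (1 / p * (periodMean r)⁻¹ ^ p) := by
  have hmean := periodMean_pos hr.continuous hpos
  have mean_speed : periodMean (radiusSpeed p r)
      = -(1 / p * periodMean fun θ => (r θ)⁻¹ ^ p) := by
    rw [periodMean, integral_radiusSpeed hr hper hpos, periodMean]
    ring
  calc |periodMean (radiusSpeed p r) + 1 / p * (periodMean r)⁻¹ ^ p|
      = 1 / p * |periodMean (fun θ => (r θ)⁻¹ ^ p) - (periodMean r)⁻¹ ^ p| := by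
        rw [mean_speed, neg_add_eq_sub, ← mul_sub, abs_mul, abs_sub_comm,
          abs_of_nonneg (a := 1 / (p : ℝ)) (by positivity)]
    _ ≤ 1 / p * (p ^ 2 * 2 ^ p * relOsc r ^ 2 * (periodMean r)⁻¹ ^ p) := by
        gcongr
        exact abs_periodMean_inv_pow_sub_le (hr.of_le one_le_two) hper hpos
          (relOsc_le_of_perturbConst_mul_le hsmall) p
    _ ≤ 1 / p * (perturbConst p * relOsc r ^ 2 * (periodMean r)⁻¹ ^ p) := by
        gcongr
        exact sq_mul_two_pow_le_perturbConst p
    _ = perturbConst p * relOsc r ^ 2 * (1 / p * (periodMean r)⁻¹ ^ p) := by ring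

lemma integral_deriv_deriv_mul_radiusSpeed {p : ℕ} (hp : p ≠ 0) (hr : ContDiff ℝ 2 r)
    (hper : Function.Periodic r (2 * π)) (hpos : ∀ θ, 0 < r θ) :
    ∫ θ in (0 : ℝ)..2 * π, deriv (deriv r) θ * radiusSpeed p r θ
      = (∫ θ in (0 : ℝ)..2 * π, (r θ)⁻¹ ^ (p + 1) * deriv (deriv r) θ ^ 2)
        - (p + 1) * (∫ θ in (0 : ℝ)..2 * π,
            (r θ)⁻¹ ^ (p + 2) * (deriv r θ ^ 2 * deriv (deriv r) θ))
        - ∫ θ in (0 : ℝ)..2 * π, (r θ)⁻¹ ^ (p + 1) * deriv r θ ^ 2 := by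
  have cont_inv := continuous_inv_of_pos hr.continuous hpos
  have cont' : Continuous (deriv r) := hr.continuous_deriv one_le_two
  have : Continuous (deriv (deriv r)) := hr.deriv'.continuous_deriv le_rfl
  have expand (θ : ℝ) : deriv (deriv r) θ * radiusSpeed p r θ
      = (r θ)⁻¹ ^ (p + 1) * deriv (deriv r) θ ^ 2
        - (p + 1) * ((r θ)⁻¹ ^ (p + 2) * (deriv r θ ^ 2 * deriv (deriv r) θ))
        - 1 / p * ((r θ)⁻¹ ^ p * deriv (deriv r) θ) := by
    rw [radiusSpeed]
    ring
  simp only [expand]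
  rw [intervalIntegral.integral_sub, intervalIntegral.integral_sub,
    intervalIntegral.integral_const_mul, intervalIntegral.integral_const_mul,
    integral_inv_pow_mul_deriv_deriv hr hper hpos p, ← mul_assoc,
    one_div_mul_cancel (Nat.cast_ne_zero.2 hp), one_mul]
  all_goals exact Continuous.intervalIntegrable (by fun_prop) _ _

lemma integral_inv_pow_mul_deriv_sq_mul_deriv_deriv_le (hr : ContDiff ℝ 2 r)
    (hper : Function.Periodic r (2 * π)) (hpos : ∀ θ, 0 < r θ) (hosc : relOsc r ≤ 1 / 2) (n : ℕ) :
    ∫ θ in (0 : ℝ)..2 * π, (r θ)⁻¹ ^ (n + 1) * (deriv r θ ^ 2 * deriv (deriv r) θ)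
      ≤ 2 ^ (n + 1) * relOsc r * (periodMean r)⁻¹ ^ n
        * ∫ θ in (0 : ℝ)..2 * π, deriv (deriv r) θ ^ 2 := by
  have hmean := periodMean_pos hr.continuous hpos
  have cont_inv := continuous_inv_of_pos hr.continuous hpos
  have cont' : Continuous (deriv r) := hr.continuous_deriv one_le_two
  have : Continuous (deriv (deriv r)) := hr.deriv'.continuous_deriv le_rfl
  calc ∫ θ in (0 : ℝ)..2 * π, (r θ)⁻¹ ^ (n + 1) * (deriv r θ ^ 2 * deriv (deriv r) θ)
      ≤ ∫ θ in (0 : ℝ)..2 * π, 2 ^ (n + 1) * (periodMean r)⁻¹ ^ (n + 1)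
          * (deriv r θ ^ 2 * |deriv (deriv r) θ|) := by
        refine intervalIntegral.integral_mono two_pi_pos.le
          (Continuous.intervalIntegrable (by fun_prop) _ _)
          (Continuous.intervalIntegrable (by fun_prop) _ _) fun θ => ?_
        have inv_pos := inv_pos.2 (hpos θ)
        have inv_pow_le := inv_pow_le_two_pow_mul (hr.of_le one_le_two) hper hpos hosc (n + 1) θ
        exact (mul_le_mul_of_nonneg_left (by gcongr; exact le_abs_self _) (by positivity)).trans
          (mul_le_mul_of_nonneg_right inv_pow_le (by positivity))
    _ ≤ 2 ^ (n + 1) * (periodMean r)⁻¹ ^ (n + 1)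
          * (√(oscEnergy r) * ∫ θ in (0 : ℝ)..2 * π, deriv (deriv r) θ ^ 2) := by
        rw [intervalIntegral.integral_const_mul]
        gcongr
        exact integral_deriv_sq_mul_abs_le hr hper
    _ = _ := by
        rw [relOsc]
        ring

namespace IsConvexRadius

lemma fCoeff_deriv_eq_zero (hr : IsConvexRadius r) {n : ℤ} (hn : |n| < 2) :
    fCoeff (deriv r) n = 0 := by
  have fCoeff_neg_one : fCoeff r (-1) = 0 := by
    rw [fCoeff, ← mul_zero (1 / (2 * (π : ℂ))), ← hr.closed]
    simp [mul_comm]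
  rw [fCoeff_deriv (hr.contDiff.of_le one_le_two) hr.periodic]
  obtain rfl | rfl | rfl : n = -1 ∨ n = 0 ∨ n = 1 := by
    rw [abs_lt] at hn
    omega
  · simp [fCoeff_neg_one]
  · simp
  · simpa [fCoeff_neg] using fCoeff_neg_one

lemma four_mul_integral_deriv_sq_le (hr : IsConvexRadius r) :
    4 * ∫ θ in (0 : ℝ)..2 * π, deriv r θ ^ 2 ≤ ∫ θ in (0 : ℝ)..2 * π, deriv (deriv r) θ ^ 2 := by
  convert sq_mul_integral_sq_le_integral_deriv_sq hr.contDiff.deriv' (periodic_deriv hr.periodic)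
    (N := 2) fun n hn => hr.fCoeff_deriv_eq_zero (mod_cast hn)
  norm_num

/- The constant `-6` comes from `-2 (∫ r''² - ∫ r'²)` and `∫ r''² ≥ 4 ∫ r'²`; everything
else is of relative size `relOsc r`. -/
lemma neg_two_mul_integral_deriv_deriv_mul_radiusSpeed_le (hr : IsConvexRadius r) {p : ℕ}
    (hp : p ≠ 0) (hsmall : perturbConst p * relOsc r ≤ 1 / 8) :
    -2 * ∫ θ in (0 : ℝ)..2 * π, deriv (deriv r) θ * radiusSpeed p r θ
      ≤ (periodMean r)⁻¹ ^ (p + 1) * (-6 + perturbConst p * relOsc r)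
        * ∫ θ in (0 : ℝ)..2 * π, deriv r θ ^ 2 := by
  have hr1 : ContDiff ℝ 1 r := hr.contDiff.of_le one_le_two
  have hmean := periodMean_pos hr.contDiff.continuous hr.pos
  have hosc := relOsc_le_of_perturbConst_mul_le hsmall
  have osc_nonneg : 0 ≤ relOsc r := div_nonneg (Real.sqrt_nonneg _) hmean.le
  have : Continuous (deriv r) := hr1.continuous_deriv le_rfl
  have cont'' : Continuous (deriv (deriv r)) := hr.contDiff.deriv'.continuous_deriv le_rfl
  have diffusion := (abs_le.1 (abs_integral_inv_pow_mul_sub_le hr1 hr.periodic hr.pos hosc (p + 1)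
    (w := fun θ => deriv (deriv r) θ ^ 2) (by fun_prop) fun _ => sq_nonneg _)).1
  have reaction := (abs_le.1 (abs_integral_inv_pow_mul_sub_le hr1 hr.periodic hr.pos hosc (p + 1)
    (w := fun θ => deriv r θ ^ 2) (by fun_prop) fun _ => sq_nonneg _)).2
  have gradient := integral_inv_pow_mul_deriv_sq_mul_deriv_deriv_le hr.contDiff hr.periodic hr.pos
    hosc (p + 1)
  have wirtinger := hr.four_mul_integral_deriv_sq_le
  rw [integral_deriv_deriv_mul_radiusSpeed hp hr.contDiff hr.periodic hr.pos]
  set A := ∫ θ in (0 : ℝ)..2 * π, deriv (deriv r) θ ^ 2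
  set G := ∫ θ in (0 : ℝ)..2 * π, deriv r θ ^ 2
  set K := (periodMean r)⁻¹ ^ (p + 1)
  set B : ℝ := (p + 1) * 2 ^ (p + 1) with B_def
  have K_pos : 0 < K := by positivity
  have G_nonneg : 0 ≤ G := intervalIntegral.integral_nonneg two_pi_pos.le fun _ _ => sq_nonneg _
  have B_mul_le : 26 * B * relOsc r ≤ perturbConst p * relOsc r :=
    mul_le_mul_of_nonneg_right (mul_two_pow_le_perturbConst p) osc_nonneg
  have cubic : (p + 1) * (∫ θ in (0 : ℝ)..2 * π,
      (r θ)⁻¹ ^ (p + 2) * (deriv r θ ^ 2 * deriv (deriv r) θ)) ≤ K * (2 * B * relOsc r * A) := by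
    refine (mul_le_mul_of_nonneg_left gradient (by positivity)).trans_eq ?_
    rw [B_def]
    ring
  push_cast [← B_def] at diffusion reaction
  have scalar : -2 * ((1 - 3 * (B * relOsc r)) * A - (1 + B * relOsc r) * G)
      ≤ (-6 + perturbConst p * relOsc r) * G := by
    nlinarith
  linarith [mul_le_mul_of_nonneg_left scalar K_pos.le]

end IsConvexRadius

end Dissipation

section SelfSimilar

/-- The radius at time `t` of the circle shrinking under `p`-curve shortening to a point at
time `T`. -/
noncomputable def selfSimilarRadius (p : ℕ) (T t : ℝ) : ℝ :=
  ((p + 1) / p * (T - t)) ^ (1 / ((p : ℝ) + 1))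

lemma selfSimilarRadius_pow {p : ℕ} {T t : ℝ} (ht : t < T) :
    selfSimilarRadius p T t ^ (p + 1) = (p + 1) / p * (T - t) := by
  have base_nonneg : 0 ≤ ((p : ℝ) + 1) / p * (T - t) :=
    mul_nonneg (by positivity) (sub_nonneg.2 ht.le)
  rw [selfSimilarRadius, ← Nat.cast_add_one, one_div,
    Real.rpow_inv_natCast_pow (by exact_mod_cast base_nonneg) p.succ_ne_zero]

lemma selfSimilarRadius_pos {p : ℕ} (hp : p ≠ 0) {T t : ℝ} (ht : t < T) :
    0 < selfSimilarRadius p T t := by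
  have : 0 < T - t := sub_pos.2 ht
  exact Real.rpow_pos_of_pos (by positivity) _

end SelfSimilar

section NearCircularSystem

/-- The relative size `√g / ρ`; for `g = oscEnergy` and `ρ = periodMean` this is `relOsc`. -/
noncomputable def relSize (g ρ : ℝ → ℝ) (t : ℝ) : ℝ := √(g t) / ρ t

/-- The differential inequalities obeyed, as long as the shape is nearly circular, by the
oscillation energy `g` and the mean `ρ` of the radius of curvature. -/
structure IsNearCircularSystem (p : ℕ) (C T : ℝ) (g ρ g' ρ' : ℝ → ℝ) : Prop where
  exponent_ne_zero : p ≠ 0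
  one_le_const : 1 ≤ C
  continuousOn_energy : ContinuousOn g (Ico 0 T)
  continuousOn_mean : ContinuousOn ρ (Ico 0 T)
  hasDerivAt_energy : ∀ t ∈ Ioo 0 T, HasDerivAt g (g' t) t
  hasDerivAt_mean : ∀ t ∈ Ioo 0 T, HasDerivAt ρ (ρ' t) t
  energy_nonneg : ∀ t ∈ Ico 0 T, 0 ≤ g t
  mean_pos : ∀ t ∈ Ico 0 T, 0 < ρ t
  deriv_energy_le : ∀ t ∈ Ioo 0 T, C * relSize g ρ t ≤ 1 / 8 →
    g' t ≤ (ρ t)⁻¹ ^ (p + 1) * (-6 + C * relSize g ρ t) * g t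
  abs_deriv_mean_add_le : ∀ t ∈ Ioo 0 T, C * relSize g ρ t ≤ 1 / 8 →
    |ρ' t + 1 / p * (ρ t)⁻¹ ^ p| ≤ C * relSize g ρ t ^ 2 * (1 / p * (ρ t)⁻¹ ^ p)

/-- The Lyapunov functions of the argument. With `K = 0`, the exponents `m = 2` and `m = 4` give
smallness of `√g / ρ`; the exponential factor absorbs the error terms at the optimal exponent
`m = 6p`. -/
noncomputable def lyapunov (g ρ : ℝ → ℝ) (m : ℕ) (K t : ℝ) : ℝ :=
  g t * (ρ t)⁻¹ ^ m * Real.exp (K * ρ t)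

lemma lyapunov_zero_right (g ρ : ℝ → ℝ) (m : ℕ) (t : ℝ) :
    lyapunov g ρ m 0 t = g t * (ρ t)⁻¹ ^ m := by
  simp [lyapunov]

namespace IsNearCircularSystem

variable {p : ℕ} {C T : ℝ} {g ρ g' ρ' : ℝ → ℝ}

lemma relSize_nonneg (S : IsNearCircularSystem p C T g ρ g' ρ') {t : ℝ} (ht : t ∈ Ico 0 T) :
    0 ≤ relSize g ρ t :=
  div_nonneg (Real.sqrt_nonneg _) (S.mean_pos t ht).le

lemma relSize_sq (S : IsNearCircularSystem p C T g ρ g' ρ') {t : ℝ} (ht : t ∈ Ico 0 T) :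
    relSize g ρ t ^ 2 = g t * (ρ t)⁻¹ ^ 2 := by
  rw [relSize, div_pow, Real.sq_sqrt (S.energy_nonneg t ht), div_eq_mul_inv, inv_pow]

lemma continuousOn_lyapunov (S : IsNearCircularSystem p C T g ρ g' ρ') (m : ℕ) (K : ℝ) :
    ContinuousOn (lyapunov g ρ m K) (Ico 0 T) := by
  have cont_energy := S.continuousOn_energy
  have cont_mean := S.continuousOn_mean
  have cont_inv : ContinuousOn (fun t => (ρ t)⁻¹) (Ico 0 T) :=
    cont_mean.inv₀ fun t ht => (S.mean_pos t ht).ne'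
  unfold lyapunov
  fun_prop

lemma hasDerivAt_lyapunov (S : IsNearCircularSystem p C T g ρ g' ρ') (m : ℕ) (K : ℝ) {t : ℝ}
    (ht : t ∈ Ioo 0 T) : HasDerivAt (lyapunov g ρ m K)
      ((ρ t)⁻¹ ^ m * Real.exp (K * ρ t) * (g' t + g t * (m * -(ρ' t * (ρ t)⁻¹) + K * ρ' t))) t := by
  have mean_ne := (S.mean_pos t (Ioo_subset_Ico_self ht)).ne'
  have hasDeriv_mean := S.hasDerivAt_mean t ht
  refine (((S.hasDerivAt_energy t ht).mul ((hasDeriv_mean.fun_inv mean_ne).fun_pow m)).mul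
    (hasDeriv_mean.const_mul K).exp).congr_deriv ?_
  rcases m with _ | m
  · simp
    ring
  · simp only [Pi.mul_apply, Nat.add_sub_cancel, div_eq_mul_inv, ← inv_pow]
    push_cast
    ring

lemma lyapunov_le (S : IsNearCircularSystem p C T g ρ g' ρ') {m : ℕ} {K s : ℝ}
    (hs : s ∈ Ico 0 T)
    (hrate : ∀ t ∈ Ioo 0 s, g' t + g t * (m * -(ρ' t * (ρ t)⁻¹) + K * ρ' t) ≤ 0) :
    lyapunov g ρ m K s ≤ lyapunov g ρ m K 0 := by
  have antitone : AntitoneOn (lyapunov g ρ m K) (Icc 0 s) := by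
    refine antitoneOn_of_hasDerivWithinAt_nonpos (convex_Icc 0 s)
      ((S.continuousOn_lyapunov m K).mono fun t ht => ⟨ht.1, ht.2.trans_lt hs.2⟩)
      (fun t ht => ?_) (fun t ht => ?_) (f' := fun t =>
      (ρ t)⁻¹ ^ m * Real.exp (K * ρ t) * (g' t + g t * (m * -(ρ' t * (ρ t)⁻¹) + K * ρ' t)))
    all_goals rw [interior_Icc] at ht
    · exact (S.hasDerivAt_lyapunov m K ⟨ht.1, ht.2.trans hs.2⟩).hasDerivWithinAt
    · have := S.mean_pos t ⟨ht.1.le, ht.2.trans hs.2⟩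
      exact mul_nonpos_of_nonneg_of_nonpos (by positivity) (hrate t ht)
  exact antitone ⟨le_rfl, hs.1⟩ ⟨hs.1, le_rfl⟩ hs.1

lemma relSize_le (S : IsNearCircularSystem p C T g ρ g' ρ') {t : ℝ}
    (hsmall : C * relSize g ρ t ≤ 1 / 8) : relSize g ρ t ≤ 1 / 8 := by
  nlinarith [S.one_le_const]

lemma mul_relSize_sq_le (S : IsNearCircularSystem p C T g ρ g' ρ') {t : ℝ} (ht : t ∈ Ico 0 T)
    (hsmall : C * relSize g ρ t ≤ 1 / 8) : C * relSize g ρ t ^ 2 ≤ 1 / 8 := by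
  nlinarith [S.relSize_le hsmall, S.relSize_nonneg ht]

lemma neg_deriv_mean_mul_inv_le (S : IsNearCircularSystem p C T g ρ g' ρ') {t : ℝ}
    (ht : t ∈ Ioo 0 T) (hsmall : C * relSize g ρ t ≤ 1 / 8) :
    -(ρ' t * (ρ t)⁻¹) ≤ 1 / p * (ρ t)⁻¹ ^ (p + 1) * (1 + C * relSize g ρ t ^ 2) := by
  have inv_pos : 0 < (ρ t)⁻¹ := inv_pos.2 (S.mean_pos t (Ioo_subset_Ico_self ht))
  have lower := (abs_le.1 (S.abs_deriv_mean_add_le t ht hsmall)).1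
  have : -ρ' t ≤ 1 / p * (ρ t)⁻¹ ^ p * (1 + C * relSize g ρ t ^ 2) := by linarith
  calc -(ρ' t * (ρ t)⁻¹) = -ρ' t * (ρ t)⁻¹ := by ring
    _ ≤ 1 / p * (ρ t)⁻¹ ^ p * (1 + C * relSize g ρ t ^ 2) * (ρ t)⁻¹ := by gcongr
    _ = _ := by ring

lemma deriv_mean_le (S : IsNearCircularSystem p C T g ρ g' ρ') {t : ℝ}
    (ht : t ∈ Ioo 0 T) (hsmall : C * relSize g ρ t ≤ 1 / 8) :
    ρ' t ≤ -(1 / (2 * p) * (ρ t)⁻¹ ^ p) := by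
  have mean_pos := S.mean_pos t (Ioo_subset_Ico_self ht)
  have upper := (abs_le.1 (S.abs_deriv_mean_add_le t ht hsmall)).2
  have speed_nonneg : 0 ≤ 1 / (p : ℝ) * (ρ t)⁻¹ ^ p := by positivity
  have half_speed : 1 / (2 * (p : ℝ)) * (ρ t)⁻¹ ^ p = 1 / 2 * (1 / p * (ρ t)⁻¹ ^ p) := by ring
  nlinarith [S.mul_relSize_sq_le (Ioo_subset_Ico_self ht) hsmall]

/- The rate of decay in `lyapunov_le`, at `K = 0`. -/
lemma lyapunov_rate_nonpos (S : IsNearCircularSystem p C T g ρ g' ρ') {t : ℝ} (ht : t ∈ Ioo 0 T)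
    (hsmall : C * relSize g ρ t ≤ 1 / 8) {m : ℕ} (hm : m ≤ 4) :
    g' t + g t * (m * -(ρ' t * (ρ t)⁻¹) + 0 * ρ' t) ≤ 0 := by
  have ht' := Ioo_subset_Ico_self ht
  have mean_pos := S.mean_pos t ht'
  have energy_nonneg := S.energy_nonneg t ht'
  have C_pos : 0 < C := one_pos.trans_le S.one_le_const
  have one_div_le : 1 / (p : ℝ) ≤ 1 := by
    simpa using Nat.cast_inv_le_one p
  set a := (ρ t)⁻¹ ^ (p + 1)
  have a_pos : 0 < a := by positivity
  have shrink : -(ρ' t * (ρ t)⁻¹) ≤ 1 * a * (1 + 1 / 8) :=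
    (S.neg_deriv_mean_mul_inv_le ht hsmall).trans <| by
      gcongr
      exact S.mul_relSize_sq_le ht' hsmall
  have weight : m * -(ρ' t * (ρ t)⁻¹) ≤ 4 * (1 * a * (1 + 1 / 8)) :=
    (mul_le_mul_of_nonneg_left shrink m.cast_nonneg).trans <| by
      gcongr
      exact_mod_cast hm
  calc g' t + g t * (m * -(ρ' t * (ρ t)⁻¹) + 0 * ρ' t)
      ≤ a * (-6 + 1 / 8) * g t + g t * (4 * (1 * a * (1 + 1 / 8))) := by
        rw [zero_mul, add_zero]
        gcongr
        exact (S.deriv_energy_le t ht hsmall).trans (by gcongr)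
    _ = -(11 / 8) * (a * g t) := by ring
    _ ≤ 0 := by nlinarith [mul_nonneg a_pos.le energy_nonneg]

lemma relSize_small (S : IsNearCircularSystem p C T g ρ g' ρ')
    (hinit : C * relSize g ρ 0 < 1 / 8) : ∀ t ∈ Ico 0 T, C * relSize g ρ t < 1 / 8 := by
  refine lt_of_bootstrap ?_ hinit fun s hs hsmall => ?_
  · exact (S.continuousOn_energy.sqrt.div S.continuousOn_mean
      fun t ht => (S.mean_pos t ht).ne').const_mul C
  have zero_mem : (0 : ℝ) ∈ Ico 0 T := ⟨le_rfl, hs.1.trans_lt hs.2⟩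
  have sq_le : relSize g ρ s ^ 2 ≤ relSize g ρ 0 ^ 2 := by
    rw [S.relSize_sq hs, S.relSize_sq zero_mem, ← lyapunov_zero_right, ← lyapunov_zero_right]
    exact S.lyapunov_le hs fun t ht =>
      S.lyapunov_rate_nonpos ⟨ht.1, ht.2.trans hs.2⟩ (hsmall t ht).le (by norm_num)
  have := S.one_le_const
  gcongr
  exact le_of_sq_le_sq sq_le (S.relSize_nonneg zero_mem)

lemma exists_relSize_le_mul_mean (S : IsNearCircularSystem p C T g ρ g' ρ')
    (hsmall : ∀ t ∈ Ico 0 T, C * relSize g ρ t ≤ 1 / 8) :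
    ∃ B, 0 ≤ B ∧ ∀ t ∈ Ico 0 T, relSize g ρ t ≤ B * ρ t := by
  refine ⟨√(g 0 * (ρ 0)⁻¹ ^ 4), Real.sqrt_nonneg _, fun t ht => ?_⟩
  have zero_mem : (0 : ℝ) ∈ Ico 0 T := ⟨le_rfl, ht.1.trans_lt ht.2⟩
  have mean_pos := S.mean_pos t ht
  have quartic_le : g t * (ρ t)⁻¹ ^ 4 ≤ g 0 * (ρ 0)⁻¹ ^ 4 := by
    rw [← lyapunov_zero_right, ← lyapunov_zero_right]
    exact S.lyapunov_le ht fun s hs => S.lyapunov_rate_nonpos ⟨hs.1, hs.2.trans ht.2⟩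
      (hsmall s ⟨hs.1.le, hs.2.trans ht.2⟩) le_rfl
  have bound_nonneg : 0 ≤ g 0 * (ρ 0)⁻¹ ^ 4 :=
    mul_nonneg (S.energy_nonneg 0 zero_mem) (by positivity)
  refine le_of_sq_le_sq ?_ (by positivity)
  rw [mul_pow, Real.sq_sqrt bound_nonneg, S.relSize_sq ht]
  calc g t * (ρ t)⁻¹ ^ 2 = g t * (ρ t)⁻¹ ^ 4 * ρ t ^ 2 := by field_simp
    _ ≤ g 0 * (ρ 0)⁻¹ ^ 4 * ρ t ^ 2 := by gcongr

/- The relative error `7 C √g / ρ ≤ 7 C B ρ` in the rate is compensated by the drift of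
`exp (K ρ)`, which has relative size `-K ρ / (2 p)`. -/
lemma critical_lyapunov_rate_nonpos (S : IsNearCircularSystem p C T g ρ g' ρ')
    (hsmall : ∀ t ∈ Ico 0 T, C * relSize g ρ t ≤ 1 / 8)
    {B t : ℝ} (hB : 0 ≤ B) (ht : t ∈ Ioo 0 T)
    (hrel : relSize g ρ t ≤ B * ρ t) :
    g' t + g t * ((6 * p : ℕ) * -(ρ' t * (ρ t)⁻¹) + 2 * p * (7 * C * B) * ρ' t) ≤ 0 := by
  have ht' := Ioo_subset_Ico_self ht
  have mean_pos := S.mean_pos t ht'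
  have energy_nonneg := S.energy_nonneg t ht'
  have C_pos : 0 < C := one_pos.trans_le S.one_le_const
  have p_pos : 0 < (p : ℝ) := Nat.cast_pos.2 (Nat.pos_of_ne_zero S.exponent_ne_zero)
  have energy_le := S.deriv_energy_le t ht (hsmall t ht')
  set ε := relSize g ρ t
  set a := (ρ t)⁻¹ ^ (p + 1) with a_def
  have a_pos : 0 < a := by positivity
  have shrink : (6 * p : ℕ) * -(ρ' t * (ρ t)⁻¹) ≤ a * (6 + 6 * (C * ε ^ 2)) := by
    calc (6 * p : ℕ) * -(ρ' t * (ρ t)⁻¹)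
        ≤ (6 * p : ℕ) * (1 / p * a * (1 + C * ε ^ 2)) := by
          gcongr
          exact S.neg_deriv_mean_mul_inv_le ht (hsmall t ht')
      _ = a * (6 + 6 * (C * ε ^ 2)) := by
          push_cast
          field_simp
  have drift : 2 * p * (7 * C * B) * ρ' t ≤ -(a * (7 * C * (B * ρ t))) := by
    calc 2 * p * (7 * C * B) * ρ' t
        ≤ 2 * p * (7 * C * B) * -(1 / (2 * p) * (ρ t)⁻¹ ^ p) := by
          gcongr
          exact S.deriv_mean_le ht (hsmall t ht')
      _ = -(a * (7 * C * (B * ρ t))) := by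
          rw [a_def, pow_succ]
          field_simp
  have error_le : C * ε + 6 * (C * ε ^ 2) ≤ 7 * C * (B * ρ t) := by
    have sq_le : ε ^ 2 ≤ ε := by
      nlinarith [S.relSize_le (hsmall t ht'), S.relSize_nonneg ht']
    calc C * ε + 6 * (C * ε ^ 2) ≤ C * ε + 6 * (C * ε) := by gcongr
      _ = 7 * C * ε := by ring
      _ ≤ 7 * C * (B * ρ t) := by gcongr
  have rate_le : a * (-6 + C * ε) + ((6 * p : ℕ) * -(ρ' t * (ρ t)⁻¹)
      + 2 * p * (7 * C * B) * ρ' t) ≤ 0 := by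
    linarith [mul_le_mul_of_nonneg_left error_le a_pos.le]
  linarith [mul_nonpos_of_nonneg_of_nonpos energy_nonneg rate_le]

lemma exists_relSize_sq_le (S : IsNearCircularSystem p C T g ρ g' ρ')
    (hsmall : ∀ t ∈ Ico 0 T, C * relSize g ρ t ≤ 1 / 8) :
    ∃ D, 0 ≤ D ∧ ∀ t ∈ Ico 0 T, relSize g ρ t ^ 2 ≤ D * ρ t ^ (6 * p - 2) := by
  obtain ⟨B, hB, hrel⟩ := S.exists_relSize_le_mul_mean hsmall
  refine ⟨|lyapunov g ρ (6 * p) (2 * p * (7 * C * B)) 0|, abs_nonneg _, fun t ht => ?_⟩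
  have mean_pos := S.mean_pos t ht
  have energy_nonneg := S.energy_nonneg t ht
  have C_pos : 0 < C := one_pos.trans_le S.one_le_const
  have split : 6 * p = 6 * p - 2 + 2 := by have := S.exponent_ne_zero; omega
  have critical_le : lyapunov g ρ (6 * p) (2 * p * (7 * C * B)) t
      ≤ lyapunov g ρ (6 * p) (2 * p * (7 * C * B)) 0 :=
    S.lyapunov_le ht fun s hs => S.critical_lyapunov_rate_nonpos hsmall hB
      ⟨hs.1, hs.2.trans ht.2⟩ (hrel s ⟨hs.1.le, hs.2.trans ht.2⟩)
  have one_le_exp : 1 ≤ Real.exp (2 * p * (7 * C * B) * ρ t) := Real.one_le_exp (by positivity)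
  calc relSize g ρ t ^ 2 = g t * (ρ t)⁻¹ ^ (6 * p) * ρ t ^ (6 * p - 2) := by
        rw [S.relSize_sq ht]
        conv_rhs => rw [split, Nat.add_sub_cancel, pow_add, inv_pow, inv_pow]
        field_simp
    _ ≤ lyapunov g ρ (6 * p) (2 * p * (7 * C * B)) t * ρ t ^ (6 * p - 2) := by
        gcongr
        exact le_mul_of_one_le_right (by positivity) one_le_exp
    _ ≤ |lyapunov g ρ (6 * p) (2 * p * (7 * C * B)) 0| * ρ t ^ (6 * p - 2) := by
        gcongr
        exact critical_le.trans (le_abs_self _)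

lemma antitoneOn_mean (S : IsNearCircularSystem p C T g ρ g' ρ')
    (hsmall : ∀ t ∈ Ico 0 T, C * relSize g ρ t ≤ 1 / 8) :
    AntitoneOn ρ (Ico 0 T) := by
  refine antitoneOn_of_hasDerivWithinAt_nonpos (convex_Ico 0 T) S.continuousOn_mean
    (fun t ht => ?_) (fun t ht => ?_) (f' := ρ')
  all_goals rw [interior_Ico] at ht
  · exact (S.hasDerivAt_mean t ht).hasDerivWithinAt
  · have := S.mean_pos t (Ioo_subset_Ico_self ht)
    exact (S.deriv_mean_le ht (hsmall t (Ioo_subset_Ico_self ht))).trans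
      (neg_nonpos.2 (by positivity))

/- Integrating `(ρ^(p+1))' = -(p+1)/p (1 + O(√g / ρ)²)` from `t` to the extinction time. -/
lemma abs_mean_div_selfSimilarRadius_sub_one_le (S : IsNearCircularSystem p C T g ρ g' ρ')
    (hsmall : ∀ t ∈ Ico 0 T, C * relSize g ρ t ≤ 1 / 8) {B t : ℝ}
    (hlim : Tendsto ρ (nhdsWithin T (Iio T)) (nhds 0)) (ht : t ∈ Ico 0 T)
    (hB : ∀ s ∈ Ioo t T, C * relSize g ρ s ^ 2 ≤ B) :
    |ρ t / selfSimilarRadius p T t - 1| ≤ B := by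
  have p_pos : 0 < (p : ℝ) := Nat.cast_pos.2 (Nat.pos_of_ne_zero S.exponent_ne_zero)
  have radius_pos := selfSimilarRadius_pos S.exponent_ne_zero ht.2
  have radius_pow := selfSimilarRadius_pow (p := p) ht.2
  have mean_pos := S.mean_pos t ht
  have sub_pos : 0 < T - t := sub_pos.2 ht.2
  have deriv_bound (s : ℝ) (hs : s ∈ Ioo t T) :
      |(p + 1 : ℕ) * ρ s ^ p * ρ' s + (p + 1) / p| ≤ (p + 1) / p * B := by
    have hs' : s ∈ Ioo 0 T := ⟨ht.1.trans_lt hs.1, hs.2⟩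
    have mean_pos := S.mean_pos s (Ioo_subset_Ico_self hs')
    have factor : (p + 1 : ℕ) * ρ s ^ p * ρ' s + ((p : ℝ) + 1) / p
        = (p + 1) * ρ s ^ p * (ρ' s + 1 / p * (ρ s)⁻¹ ^ p) := by
      push_cast
      rw [inv_pow]
      field_simp
    rw [factor, abs_mul, abs_of_pos (a := (p + 1) * ρ s ^ p) (by positivity)]
    calc (p + 1) * ρ s ^ p * |ρ' s + 1 / p * (ρ s)⁻¹ ^ p|
        ≤ (p + 1) * ρ s ^ p * (B * (1 / p * (ρ s)⁻¹ ^ p)) := by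
          gcongr
          exact (S.abs_deriv_mean_add_le s hs' (hsmall s (Ioo_subset_Ico_self hs'))).trans
            (by gcongr; exact hB s hs)
      _ = (p + 1) / p * B := by
          rw [inv_pow]
          field_simp
  have extinction := abs_sub_mul_le_of_tendsto_zero (z := fun s => ρ s ^ (p + 1)) ht.2
    ((S.continuousOn_mean.mono (Ico_subset_Ico_left ht.1)).pow _)
    (fun s hs => (S.hasDerivAt_mean s ⟨ht.1.trans_lt hs.1, hs.2⟩).fun_pow (p + 1)) deriv_bound
    (by simpa using hlim.pow (p + 1))
  refine (abs_sub_one_le_abs_pow_succ_sub_one p (by positivity)).trans ?_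
  rw [div_pow, div_sub_one (by positivity), abs_div, radius_pow,
    abs_of_pos (a := ((p : ℝ) + 1) / p * (T - t)) (by positivity), div_le_iff₀ (by positivity)]
  linarith

lemma abs_mean_div_selfSimilarRadius_sub_one_le_half
    (S : IsNearCircularSystem p C T g ρ g' ρ')
    (hsmall : ∀ t ∈ Ico 0 T, C * relSize g ρ t ≤ 1 / 8) {t : ℝ}
    (hlim : Tendsto ρ (nhdsWithin T (Iio T)) (nhds 0)) (ht : t ∈ Ico 0 T) :
    |ρ t / selfSimilarRadius p T t - 1| ≤ 1 / 2 := by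
  refine S.abs_mean_div_selfSimilarRadius_sub_one_le hsmall hlim ht fun s hs => ?_
  have hs' : s ∈ Ico 0 T := ⟨ht.1.trans hs.1.le, hs.2⟩
  linarith [S.mul_relSize_sq_le hs' (hsmall s hs')]

lemma exists_decay_rates (S : IsNearCircularSystem p C T g ρ g' ρ')
    (hsmall : ∀ t ∈ Ico 0 T, C * relSize g ρ t ≤ 1 / 8)
    (hlim : Tendsto ρ (nhdsWithin T (Iio T)) (nhds 0)) :
    ∃ D, ∀ t ∈ Ico 0 T, relSize g ρ t ^ 2 ≤ D * selfSimilarRadius p T t ^ (6 * p - 2) ∧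
      |ρ t / selfSimilarRadius p T t - 1| ≤ D * selfSimilarRadius p T t ^ (6 * p - 2) := by
  obtain ⟨D, hD, hrel⟩ := S.exists_relSize_sq_le hsmall
  have one_le_C := S.one_le_const
  refine ⟨C * (D * 2 ^ (6 * p - 2)), fun t ht => ?_⟩
  have radius_pos := selfSimilarRadius_pos S.exponent_ne_zero ht.2
  have mean_pos := S.mean_pos t ht
  have mean_le : ρ t ≤ 2 * selfSimilarRadius p T t := by
    rw [← div_le_iff₀ radius_pos]
    linarith [(abs_le.1 (S.abs_mean_div_selfSimilarRadius_sub_one_le_half hsmall hlim ht)).2]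
  have mean_pow_le : D * ρ t ^ (6 * p - 2)
      ≤ D * 2 ^ (6 * p - 2) * selfSimilarRadius p T t ^ (6 * p - 2) := by
    rw [mul_assoc, ← mul_pow]
    gcongr
  constructor
  · refine ((hrel t ht).trans mean_pow_le).trans ?_
    rw [mul_assoc C]
    exact le_mul_of_one_le_left (by positivity) one_le_C
  · refine S.abs_mean_div_selfSimilarRadius_sub_one_le hsmall hlim ht fun s hs => ?_
    have hs' : s ∈ Ico 0 T := ⟨ht.1.trans hs.1.le, hs.2⟩
    have mean_pos_s := S.mean_pos s hs'
    rw [mul_assoc C]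
    gcongr
    refine ((hrel s hs').trans ?_).trans mean_pow_le
    gcongr
    exact S.antitoneOn_mean hsmall ht hs' hs.1.le

end IsNearCircularSystem

end NearCircularSystem

section Parametric

variable {s : Set ℝ} {F F' : ℝ → ℝ → ℝ} {t : ℝ}

lemma continuous_slice (hF : ContinuousOn F.uncurry (s ×ˢ univ)) (ht : t ∈ s) :
    Continuous (F t) :=
  hF.comp_continuous (f := fun x => (t, x)) (by fun_prop) fun _ => ⟨ht, mem_univ _⟩

lemma contDiff_slice {n : WithTop ℕ∞} (hF : ContDiffOn ℝ n F.uncurry (s ×ˢ univ)) (ht : t ∈ s) :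
    ContDiff ℝ n (F t) :=
  hF.comp_contDiff (f := fun x => (t, x)) (by fun_prop) fun _ => ⟨ht, mem_univ _⟩

lemma deriv_slice_eq_fderivWithin (hF : DifferentiableOn ℝ F.uncurry (s ×ˢ univ)) (ht : t ∈ s)
    (x : ℝ) : deriv (F t) x = fderivWithin ℝ F.uncurry (s ×ˢ univ) (t, x) (0, 1) := by
  have hasFDeriv := (hF (t, x) ⟨ht, mem_univ _⟩).hasFDerivWithinAt
  have hasDeriv_slice : HasDerivWithinAt (fun y : ℝ => (t, y)) ((0 : ℝ), (1 : ℝ)) univ x :=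
    ((hasDerivAt_const x t).prodMk (hasDerivAt_id x)).hasDerivWithinAt
  have comp := hasFDeriv.comp_hasDerivWithinAt x hasDeriv_slice fun _ _ => ⟨ht, mem_univ _⟩
  rw [hasDerivWithinAt_univ] at comp
  exact comp.deriv

lemma contDiffOn_deriv_slice {m n : WithTop ℕ∞} (hF : ContDiffOn ℝ n F.uncurry (s ×ˢ univ))
    (hs : UniqueDiffOn ℝ s) (hmn : m + 1 ≤ n) :
    ContDiffOn ℝ m (fun t => deriv (F t)).uncurry (s ×ˢ univ) := by
  have n_ne_zero : n ≠ 0 := by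
    rintro rfl
    simp at hmn
  exact ((hF.fderivWithin (hs.prod uniqueDiffOn_univ) hmn).clm_apply contDiffOn_const).congr
    fun q hq => deriv_slice_eq_fderivWithin (hF.differentiableOn n_ne_zero) hq.1 q.2

lemma fderiv_uncurry_apply (hs : IsOpen s) (hF : DifferentiableOn ℝ F.uncurry (s ×ˢ univ))
    (hF' : ∀ t ∈ s, ∀ x, HasDerivAt (fun u => F u x) (F' t x) t) (ht : t ∈ s) (x : ℝ) :
    fderiv ℝ F.uncurry (t, x) (1, 0) = F' t x := by
  have mem_nhds := (hs.prod isOpen_univ).mem_nhds (x := (t, x)) ⟨ht, mem_univ x⟩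
  have hasFDeriv := (hF.differentiableAt mem_nhds).hasFDerivAt
  have hasDeriv_line : HasDerivAt (fun u : ℝ => (u, x)) ((1 : ℝ), (0 : ℝ)) t :=
    (hasDerivAt_id t).prodMk (hasDerivAt_const t x)
  exact (hasFDeriv.comp_hasDerivAt (f := fun u => (u, x)) t hasDeriv_line).unique (hF' t ht x)

lemma contDiffOn_uncurry_of_hasDerivAt {m n : WithTop ℕ∞} (hs : IsOpen s)
    (hF : ContDiffOn ℝ n F.uncurry (s ×ˢ univ)) (hmn : m + 1 ≤ n)
    (hF' : ∀ t ∈ s, ∀ x, HasDerivAt (fun u => F u x) (F' t x) t) :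
    ContDiffOn ℝ m F'.uncurry (s ×ˢ univ) := by
  have n_ne_zero : n ≠ 0 := by
    rintro rfl
    simp at hmn
  exact ((hF.fderiv_of_isOpen (hs.prod isOpen_univ) hmn).clm_apply contDiffOn_const).congr
    fun q hq => (fderiv_uncurry_apply hs (hF.differentiableOn n_ne_zero) hF' hq.1 q.2).symm

/- Symmetry of the second derivative of `F.uncurry`. -/
lemma hasDerivAt_deriv_slice (hs : IsOpen s) (hF : ContDiffOn ℝ 2 F.uncurry (s ×ˢ univ))
    (hF' : ∀ t ∈ s, ∀ x, HasDerivAt (fun u => F u x) (F' t x) t) (ht : t ∈ s) (x : ℝ) :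
    HasDerivAt (fun u => deriv (F u) x) (deriv (F' t) x) t := by
  have hs' : IsOpen (s ×ˢ (univ : Set ℝ)) := hs.prod isOpen_univ
  have mem_nhds := hs'.mem_nhds (x := (t, x)) ⟨ht, mem_univ x⟩
  have diff_F := hF.differentiableOn two_ne_zero
  have diff_fderiv : DifferentiableAt ℝ (fderiv ℝ F.uncurry) (t, x) :=
    ((hF.fderiv_of_isOpen hs' (m := 1) (by norm_num)).contDiffAt mem_nhds).differentiableAt
      one_ne_zero
  have hasFDeriv_apply (v : ℝ × ℝ) := (ContinuousLinearMap.apply ℝ ℝ v).hasFDerivAt.comp (t, x)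
    diff_fderiv.hasFDerivAt
  have hasDeriv_time : HasDerivAt (fun u : ℝ => (u, x)) ((1 : ℝ), (0 : ℝ)) t :=
    (hasDerivAt_id t).prodMk (hasDerivAt_const t x)
  have hasDeriv_space : HasDerivAt (fun y : ℝ => (t, y)) ((0 : ℝ), (1 : ℝ)) x :=
    (hasDerivAt_const x t).prodMk (hasDerivAt_id x)
  have time_deriv : HasDerivAt (fun u => fderiv ℝ F.uncurry (u, x) (0, 1))
      (fderiv ℝ (fderiv ℝ F.uncurry) (t, x) (1, 0) (0, 1)) t :=
    (hasFDeriv_apply (0, 1)).comp_hasDerivAt (f := fun u => (u, x)) t hasDeriv_time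
  have space_deriv : HasDerivAt (fun y => fderiv ℝ F.uncurry (t, y) (1, 0))
      (fderiv ℝ (fderiv ℝ F.uncurry) (t, x) (0, 1) (1, 0)) x :=
    (hasFDeriv_apply (1, 0)).comp_hasDerivAt x hasDeriv_space
  have symm := (hF.contDiffAt mem_nhds).isSymmSndFDerivAt (by simp) (1, 0) (0, 1)
  have slice_eq : deriv (F' t) x = fderiv ℝ (fderiv ℝ F.uncurry) (t, x) (0, 1) (1, 0) := by
    rw [← space_deriv.deriv]
    simp only [fderiv_uncurry_apply hs diff_F hF' ht]
  rw [slice_eq, ← symm]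
  refine time_deriv.congr_of_eventuallyEq ?_
  filter_upwards [hs.mem_nhds ht] with u hu
  rw [deriv_slice_eq_fderivWithin diff_F hu, fderivWithin_of_isOpen hs' ⟨hu, mem_univ x⟩]

lemma continuousOn_intervalIntegral (hF : ContinuousOn F.uncurry (s ×ˢ univ)) (a b : ℝ) :
    ContinuousOn (fun t => ∫ x in a..b, F t x) s := by
  rw [continuousOn_iff_continuous_domRestrict]
  refine intervalIntegral.continuous_parametric_intervalIntegral_of_continuous'
    (f := fun (t : s) x => F t x) ?_ a b
  exact hF.comp_continuous (f := fun q : s × ℝ => ((q.1 : ℝ), q.2)) (by fun_prop)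
    fun q => ⟨q.1.2, mem_univ _⟩

lemma hasDerivAt_intervalIntegral (hs : IsOpen s) (hF : ContinuousOn F.uncurry (s ×ˢ univ))
    (hF' : ContinuousOn F'.uncurry (s ×ˢ univ))
    (hderiv : ∀ t ∈ s, ∀ x, HasDerivAt (fun u => F u x) (F' t x) t) (ht : t ∈ s) (a b : ℝ) :
    HasDerivAt (fun t => ∫ x in a..b, F t x) (∫ x in a..b, F' t x) t := by
  obtain ⟨K, K_mem, K_subset, K_compact⟩ := local_compact_nhds (hs.mem_nhds ht)
  obtain ⟨C, hC⟩ := (K_compact.prod isCompact_uIcc).exists_bound_of_continuousOn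
    (hF'.mono (prod_mono K_subset (subset_univ (uIcc a b))))
  refine (intervalIntegral.hasDerivAt_integral_of_dominated_loc_of_deriv_le
    (bound := fun _ => C) K_mem ?_ ?_ ?_ ?_ ?_ ?_).2
  · filter_upwards [hs.mem_nhds ht] with u hu
    exact (continuous_slice hF hu).aestronglyMeasurable
  · exact (continuous_slice hF ht).intervalIntegrable _ _
  · exact (continuous_slice hF' ht).aestronglyMeasurable
  · exact .of_forall fun x hx u hu => hC (u, x) ⟨hu, uIoc_subset_uIcc hx⟩
  · exact intervalIntegrable_const
  · exact .of_forall fun x _ u hu => hderiv u (K_subset hu) x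

lemma hasDerivAt_periodMean (hs : IsOpen s) (hF : ContDiffOn ℝ 1 F.uncurry (s ×ˢ univ))
    (hF' : ∀ t ∈ s, ∀ x, HasDerivAt (fun u => F u x) (F' t x) t) (ht : t ∈ s) :
    HasDerivAt (fun t => periodMean (F t)) (periodMean (F' t)) t :=
  (hasDerivAt_intervalIntegral hs hF.continuousOn
    (contDiffOn_uncurry_of_hasDerivAt hs hF (m := 0) (by norm_num) hF').continuousOn
    hF' ht _ _).const_mul _

lemma hasDerivAt_oscEnergy (hs : IsOpen s) (hF : ContDiffOn ℝ 2 F.uncurry (s ×ˢ univ))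
    (hper : ∀ t ∈ s, (F t).Periodic (2 * π))
    (hF' : ∀ t ∈ s, ∀ x, HasDerivAt (fun u => F u x) (F' t x) t) (ht : t ∈ s) :
    HasDerivAt (fun t => oscEnergy (F t))
      (2 * π * (-2 * ∫ x in (0 : ℝ)..2 * π, deriv (deriv (F t)) x * F' t x)) t := by
  have contDiff_deriv := contDiffOn_deriv_slice hF hs.uniqueDiffOn (m := 1) (by norm_num)
  have contDiff_F' := contDiffOn_uncurry_of_hasDerivAt hs hF (m := 1) (by norm_num) hF'
  have cont_mixed : ContinuousOn (fun t => deriv (F' t)).uncurry (s ×ˢ univ) :=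
    (contDiffOn_deriv_slice contDiff_F' hs.uniqueDiffOn (m := 0) (by norm_num)).continuousOn
  have leibniz := hasDerivAt_intervalIntegral hs (F := fun t x => deriv (F t) x ^ 2)
    (F' := fun t x => 2 * (deriv (F t) x * deriv (F' t) x)) (contDiff_deriv.continuousOn.fun_pow 2)
    ((contDiff_deriv.continuousOn.mul cont_mixed).const_mul 2)
    (fun u hu x => ((hasDerivAt_deriv_slice hs hF hF' hu x).fun_pow 2).congr_deriv (by ring))
    ht 0 (2 * π)
  refine (leibniz.const_mul (2 * π)).congr_deriv ?_
  have F'_periodic : (F' t).Periodic (2 * π) := fun x =>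
    (hF' t ht (x + 2 * π)).unique <| (hF' t ht x).congr_of_eventuallyEq <| by
      filter_upwards [hs.mem_nhds ht] with u hu
      exact hper u hu x
  have slice_deriv := contDiff_slice contDiff_deriv ht
  have slice_F' := contDiff_slice contDiff_F' ht
  have parts := intervalIntegral.integral_mul_deriv_eq_deriv_mul (a := 0) (b := 2 * π)
    (fun x _ => (slice_deriv.differentiable one_ne_zero x).hasDerivAt)
    (fun x _ => (slice_F'.differentiable one_ne_zero x).hasDerivAt)
    ((slice_deriv.continuous_deriv le_rfl).intervalIntegrable _ _)
    ((slice_F'.continuous_deriv le_rfl).intervalIntegrable _ _)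
  have boundary : deriv (F t) (2 * π) * F' t (2 * π) = deriv (F t) 0 * F' t 0 := by
    rw [(periodic_deriv (hper t ht)).eq, F'_periodic.eq]
  rw [intervalIntegral.integral_const_mul, parts, boundary]
  ring

end Parametric

section RadiusFlow

/-- `r t θ` is the radius of curvature, at normal angle `θ`, of a closed convex curve moving by
`p`-curve shortening on the time interval `[0, T)`. -/
structure IsRadiusFlow (p : ℕ) (T : ℝ) (r : ℝ → ℝ → ℝ) : Prop where
  contDiffOn : ContDiffOn ℝ 2 r.uncurry (Ico 0 T ×ˢ univ)
  isConvexRadius : ∀ t ∈ Ico 0 T, IsConvexRadius (r t)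
  hasDerivAt : ∀ t ∈ Ioo 0 T, ∀ θ, HasDerivAt (fun s => r s θ) (radiusSpeed p (r t) θ) t

namespace IsRadiusFlow

variable {p : ℕ} {T : ℝ} {r : ℝ → ℝ → ℝ}

lemma isNearCircularSystem (R : IsRadiusFlow p T r) (hp : p ≠ 0) :
    IsNearCircularSystem p (perturbConst p) T (fun t => oscEnergy (r t))
      (fun t => periodMean (r t))
      (fun t => 2 * π * (-2 * ∫ θ in (0 : ℝ)..2 * π, deriv (deriv (r t)) θ * radiusSpeed p (r t) θ))
      (fun t => periodMean (radiusSpeed p (r t))) where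
  exponent_ne_zero := hp
  one_le_const := one_le_perturbConst p
  continuousOn_energy := by
    have contDiff_deriv := contDiffOn_deriv_slice R.contDiffOn (uniqueDiffOn_Ico 0 T) (m := 1)
      (by norm_num)
    exact (continuousOn_intervalIntegral (F := fun t θ => deriv (r t) θ ^ 2)
      (contDiff_deriv.continuousOn.fun_pow 2) 0 (2 * π)).const_mul (2 * π)
  continuousOn_mean := (continuousOn_intervalIntegral R.contDiffOn.continuousOn _ _).const_mul _
  hasDerivAt_energy t ht := hasDerivAt_oscEnergy isOpen_Ioo
    (R.contDiffOn.mono (prod_mono_left Ioo_subset_Ico_self))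
    (fun t ht => (R.isConvexRadius t (Ioo_subset_Ico_self ht)).periodic) R.hasDerivAt ht
  hasDerivAt_mean t ht := hasDerivAt_periodMean isOpen_Ioo
    ((R.contDiffOn.mono (prod_mono_left Ioo_subset_Ico_self)).of_le one_le_two) R.hasDerivAt ht
  energy_nonneg t _ := oscEnergy_nonneg (r t)
  mean_pos t ht := periodMean_pos (R.isConvexRadius t ht).contDiff.continuous
    (R.isConvexRadius t ht).pos
  deriv_energy_le t ht hsmall := by
    have hr := R.isConvexRadius t (Ioo_subset_Ico_self ht)
    have dissipation := mul_le_mul_of_nonneg_left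
      (hr.neg_two_mul_integral_deriv_deriv_mul_radiusSpeed_le hp hsmall) Real.two_pi_pos.le
    refine dissipation.trans_eq ?_
    simp only [relSize, relOsc, oscEnergy]
    ring
  abs_deriv_mean_add_le t ht hsmall := by
    have hr := R.isConvexRadius t (Ioo_subset_Ico_self ht)
    exact abs_periodMean_radiusSpeed_add_le hr.contDiff hr.periodic hr.pos hsmall

end IsRadiusFlow

end RadiusFlow

section Curvature

variable {f : ℝ → ℝ}

lemma deriv_inv_of_pos (hf : ContDiff ℝ 1 f) (hpos : ∀ x, 0 < f x) :
    deriv (fun x => (f x)⁻¹) = fun x => -deriv f x / f x ^ 2 :=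
  funext fun x => deriv_fun_inv'' (hf.differentiable one_ne_zero x) (hpos x).ne'

lemma deriv_deriv_inv_of_pos (hf : ContDiff ℝ 2 f) (hpos : ∀ x, 0 < f x) (x : ℝ) :
    deriv (deriv fun x => (f x)⁻¹) x
      = -deriv (deriv f) x / f x ^ 2 + 2 * deriv f x ^ 2 / f x ^ 3 := by
  have hf1 : ContDiff ℝ 1 f := hf.of_le one_le_two
  have diff_f := hf1.differentiable one_ne_zero x
  have diff_deriv := (hf.deriv' (n := 1)).differentiable one_ne_zero x
  have f_ne := (hpos x).ne'
  rw [deriv_inv_of_pos hf1 hpos,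
    (diff_deriv.hasDerivAt.fun_neg.fun_div (diff_f.hasDerivAt.fun_pow 2) (by positivity)).deriv]
  field_simp
  ring

lemma radiusSpeed_inv {p : ℕ} (hp : p ≠ 0) (hf : ContDiff ℝ 2 f) (hpos : ∀ x, 0 < f x) (θ : ℝ) :
    radiusSpeed p (fun x => (f x)⁻¹) θ
      = -(f θ ^ 2 * (f θ ^ (p - 1) * deriv (deriv f) θ
        + ((p : ℝ) - 1) * f θ ^ (p - 2) * deriv f θ ^ 2 + 1 / (p : ℝ) * f θ ^ p)) / f θ ^ 2 := by
  have f_ne := (hpos θ).ne'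
  rw [radiusSpeed, deriv_deriv_inv_of_pos hf hpos, deriv_inv_of_pos (hf.of_le one_le_two) hpos]
  simp only [inv_inv]
  obtain _ | _ | n := p
  · contradiction
  · simp only [zero_add, Nat.cast_one]
    field_simp
    ring
  · simp only [show n + 1 + 1 - 1 = n + 1 from rfl]
    push_cast
    field_simp
    ring

lemma oscEnergy_inv_le (hf : ContDiff ℝ 1 f) (hper : Function.Periodic f (2 * π))
    (hpos : ∀ x, 0 < f x) (hosc : relOsc f ≤ 1 / 2) :
    oscEnergy (fun x => (f x)⁻¹) ≤ (4 * (periodMean f)⁻¹ ^ 2) ^ 2 * oscEnergy f := by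
  have cont_deriv := hf.continuous_deriv le_rfl
  have cont_inv := continuous_inv_of_pos hf.continuous hpos
  have pointwise (x : ℝ) :
      deriv (fun x => (f x)⁻¹) x ^ 2 ≤ (4 * (periodMean f)⁻¹ ^ 2) ^ 2 * deriv f x ^ 2 := by
    calc deriv (fun x => (f x)⁻¹) x ^ 2 = (f x)⁻¹ ^ 4 * deriv f x ^ 2 := by
          rw [deriv_inv_of_pos hf hpos]
          ring
      _ ≤ 2 ^ 4 * (periodMean f)⁻¹ ^ 4 * deriv f x ^ 2 := by
          gcongr
          exact inv_pow_le_two_pow_mul hf hper hpos hosc 4 x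
      _ = (4 * (periodMean f)⁻¹ ^ 2) ^ 2 * deriv f x ^ 2 := by ring
  have cont_deriv_inv : Continuous (deriv fun x => (f x)⁻¹) := by
    simp only [deriv_inv_of_pos hf hpos, div_eq_mul_inv, ← inv_pow]
    fun_prop
  rw [oscEnergy, oscEnergy, mul_left_comm]
  refine mul_le_mul_of_nonneg_left ?_ two_pi_pos.le
  rw [← intervalIntegral.integral_const_mul]
  exact intervalIntegral.integral_mono two_pi_pos.le
    ((cont_deriv_inv.pow 2).intervalIntegrable _ _)
    (((cont_deriv.pow 2).const_mul _).intervalIntegrable _ _) pointwise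

lemma abs_mul_periodMean_inv_sub_one_le (hf : ContDiff ℝ 1 f)
    (hper : Function.Periodic f (2 * π)) (hpos : ∀ x, 0 < f x) (hosc : relOsc f ≤ 1 / 2) :
    |periodMean f * periodMean (fun x => (f x)⁻¹) - 1| ≤ 2 * relOsc f ^ 2 := by
  have hmean := periodMean_pos hf.continuous hpos
  have bound := abs_periodMean_inv_pow_sub_le hf hper hpos hosc 1
  simp only [pow_one, Nat.cast_one, one_pow, one_mul] at bound
  calc |periodMean f * periodMean (fun x => (f x)⁻¹) - 1|
      = periodMean f * |periodMean (fun x => (f x)⁻¹) - (periodMean f)⁻¹| := by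
        rw [← abs_of_pos hmean, ← abs_mul, abs_of_pos hmean, mul_sub, mul_inv_cancel₀ hmean.ne']
    _ ≤ periodMean f * (2 * relOsc f ^ 2 * (periodMean f)⁻¹) := by gcongr
    _ = 2 * relOsc f ^ 2 := by field_simp

lemma relOsc_inv_le (hf : ContDiff ℝ 1 f) (hper : Function.Periodic f (2 * π))
    (hpos : ∀ x, 0 < f x) (hosc : relOsc f ≤ 1 / 2) :
    relOsc (fun x => (f x)⁻¹) ≤ 8 * relOsc f := by
  have hmean := periodMean_pos hf.continuous hpos
  have hmean_inv := periodMean_pos (continuous_inv_of_pos hf.continuous hpos)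
    fun x => inv_pos.2 (hpos x)
  have relOsc_nonneg : 0 ≤ relOsc f := div_nonneg (Real.sqrt_nonneg _) hmean.le
  have half_le : 1 / 2 ≤ periodMean f * periodMean (fun x => (f x)⁻¹) := by
    have := (abs_le.1 (abs_mul_periodMean_inv_sub_one_le hf hper hpos hosc)).1
    nlinarith
  have sqrt_le : √(oscEnergy fun x => (f x)⁻¹) ≤ 4 * (periodMean f)⁻¹ ^ 2 * √(oscEnergy f) := by
    rw [← Real.sqrt_sq (show 0 ≤ 4 * (periodMean f)⁻¹ ^ 2 by positivity),
      ← Real.sqrt_mul (sq_nonneg _)]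
    exact Real.sqrt_le_sqrt (oscEnergy_inv_le hf hper hpos hosc)
  rw [relOsc, div_le_iff₀ hmean_inv]
  calc √(oscEnergy fun x => (f x)⁻¹) ≤ 4 * (periodMean f)⁻¹ ^ 2 * √(oscEnergy f) := sqrt_le
    _ = 8 * relOsc f * (1 / 2 * (periodMean f)⁻¹) := by
        rw [relOsc]
        ring
    _ ≤ 8 * relOsc f * periodMean (fun x => (f x)⁻¹) := by
        gcongr
        rwa [← div_eq_mul_inv, div_le_iff₀' hmean]

lemma exists_relOsc_le_of_mul_seminorm2_le {δ : ℝ} (hδ : 0 < δ) :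
    ∃ c > 0, ∀ f : ℝ → ℝ, ContDiff ℝ 2 f → Function.Periodic f (2 * π) → 0 < periodMean f →
      c * seminorm2 f ≤ periodMean f → relOsc f ≤ δ := by
  let K := 4 * π * √(∑' n : ℤ, 1 / (n : ℝ) ^ 2)
  have K_nonneg : 0 ≤ K := by positivity
  refine ⟨(K + 1) / δ, by positivity, fun f hf hper hmean hle => ?_⟩
  have seminorm_nonneg : 0 ≤ seminorm2 f :=
    le_max_of_le_left (Real.iSup_nonneg fun n => by positivity)
  rw [relOsc, div_le_iff₀ hmean]
  calc √(oscEnergy f) ≤ K * seminorm2 f := sqrt_oscEnergy_le_seminorm2 hf hper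
    _ ≤ (K + 1) * seminorm2 f := by gcongr; linarith
    _ = δ * ((K + 1) / δ * seminorm2 f) := by field_simp
    _ ≤ δ * periodMean f := by gcongr

lemma fCoeff_zero_re (f : ℝ → ℝ) : (fCoeff f 0).re = periodMean f := by
  simp only [fCoeff, Int.cast_zero, mul_zero, zero_mul, neg_zero, Complex.exp_zero, mul_one,
    intervalIntegral.integral_ofReal, periodMean]
  norm_cast

end Curvature

section PCurveShortening

/-- The radius of curvature of the flow with curvature `k θ t`, with the time variable first. -/
noncomputable def radiusOf (k : ℝ → ℝ → ℝ) (t θ : ℝ) : ℝ := (k θ t)⁻¹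

namespace IsPCSF

variable {p : ℕ} {T : ℝ} {k : ℝ → ℝ → ℝ} {ψ : ℝ → ℝ}

lemma contDiff_slice (H : IsPCSF p T k ψ) {t : ℝ} (ht : t ∈ Ico 0 T) :
    ContDiff ℝ 2 fun θ => k θ t :=
  (H.1.comp_contDiff (f := fun θ => (θ, t)) (by fun_prop)
    fun _ => ⟨mem_univ _, ht⟩).of_le (WithTop.coe_le_coe.2 le_top)

lemma isRadiusFlow (H : IsPCSF p T k ψ) (hp : p ≠ 0) : IsRadiusFlow p T (radiusOf k) := by
  have ⟨smooth, periodic, pos, pde, _, _, _, _, _, closed⟩ := H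
  refine ⟨?_, fun t ht => ⟨?_, fun θ => ?_, fun θ => inv_pos.2 (pos θ t ht), ?_⟩, fun t ht θ => ?_⟩
  · have smooth_swap : ContDiffOn ℝ 2 (fun q : ℝ × ℝ => k q.2 q.1) (Ico 0 T ×ˢ univ) :=
      (smooth.comp (f := fun q : ℝ × ℝ => (q.2, q.1)) (by fun_prop)
        fun q hq => ⟨mem_univ _, hq.1⟩).of_le (WithTop.coe_le_coe.2 le_top)
    exact smooth_swap.inv fun q hq => (pos q.2 q.1 hq.1).ne'
  · exact (H.contDiff_slice ht).inv fun θ => (pos θ t ht).ne'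
  · rw [radiusOf, radiusOf, periodic]
  · simpa only [radiusOf, Complex.ofReal_inv, ← div_eq_mul_inv] using closed t ht
  · have ht' := Ioo_subset_Ico_self ht
    exact ((pde θ t ht').fun_inv (pos θ t ht').ne').congr_deriv
      (radiusSpeed_inv hp (H.contDiff_slice ht') (fun x => pos x t ht') θ).symm

lemma relOsc_radiusOf_zero_le (H : IsPCSF p T k ψ) (hosc : relOsc ψ ≤ 1 / 2) :
    relOsc (radiusOf k 0) ≤ 8 * relOsc ψ := by
  have ⟨_, _, _, _, initial, smooth, pos, periodic, _, _⟩ := H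
  have radius_eq : radiusOf k 0 = fun θ => (ψ θ)⁻¹ := funext fun θ => by rw [radiusOf, initial]
  rw [radius_eq]
  exact relOsc_inv_le (smooth.of_le (WithTop.coe_le_coe.2 le_top)) periodic pos hosc

/- Near a circle `k ≤ 2 / periodMean (1 / k)`, so blow-up of `k` forces the mean radius to `0`. -/
lemma tendsto_periodMean_radiusOf (H : IsPCSF p T k ψ) (hp : p ≠ 0) (hT : 0 < T)
    (hosc : ∀ t ∈ Ico 0 T, relOsc (radiusOf k t) ≤ 1 / 2) :
    Tendsto (fun t => periodMean (radiusOf k t)) (nhdsWithin T (Iio T)) (nhds 0) := by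
  have ⟨_, _, _, _, _, _, _, _, blowUp, _⟩ := H
  have mean_pos (t : ℝ) (ht : t ∈ Ico 0 T) : 0 < periodMean (radiusOf k t) :=
    ((H.isRadiusFlow hp).isNearCircularSystem hp).mean_pos t ht
  have eventually_mem : ∀ᶠ t in nhdsWithin T (Iio T), t ∈ Ico 0 T := Ico_mem_nhdsLT hT
  have tendsto_bound : Tendsto (fun t => 2 * (⨆ θ : Icc (0 : ℝ) (2 * π), k θ t)⁻¹)
      (nhdsWithin T (Iio T)) (nhds 0) := by
    simpa using (tendsto_inv_atTop_zero.comp blowUp).const_mul 2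
  refine tendsto_of_tendsto_of_tendsto_of_le_of_le' tendsto_const_nhds tendsto_bound
    (eventually_mem.mono fun t ht => (mean_pos t ht).le) ?_
  filter_upwards [eventually_mem, blowUp.eventually_gt_atTop 0] with t ht sup_pos
  have hr := (H.isRadiusFlow hp).isConvexRadius t ht
  have : Nonempty (Icc (0 : ℝ) (2 * π)) := ⟨⟨0, le_rfl, two_pi_pos.le⟩⟩
  have sup_le : ⨆ θ : Icc (0 : ℝ) (2 * π), k θ t ≤ 2 * (periodMean (radiusOf k t))⁻¹ := by
    refine ciSup_le fun θ => ?_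
    simpa [radiusOf] using
      inv_pow_le_two_pow_mul (hr.contDiff.of_le one_le_two) hr.periodic hr.pos (hosc t ht) 1 θ
  rw [← div_eq_mul_inv, le_div_iff₀ (mean_pos t ht)] at sup_le
  rw [← div_eq_mul_inv, le_div_iff₀' sup_pos]
  exact sup_le

end IsPCSF

end PCurveShortening

section Rescaling

lemma sub_tOf (p : ℕ) (T τ : ℝ) : T - tOf p T τ = T * Real.exp (-((p : ℝ) + 1) * τ) := by
  rw [tOf]
  ring

lemma tOf_mem_Ico (p : ℕ) {T τ : ℝ} (hT : 0 < T) (hτ : 0 ≤ τ) : tOf p T τ ∈ Ico 0 T := by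
  have exp_le : Real.exp (-((p : ℝ) + 1) * τ) ≤ 1 :=
    Real.exp_le_one_iff.2 (mul_nonpos_of_nonpos_of_nonneg (by linarith [p.cast_nonneg (α := ℝ)]) hτ)
  refine ⟨mul_nonneg hT.le (sub_nonneg.2 exp_le), sub_pos.1 ?_⟩
  rw [sub_tOf]
  positivity

lemma selfSimilarRadius_tOf (p : ℕ) {T : ℝ} (hT : 0 ≤ T) (τ : ℝ) :
    selfSimilarRadius p T (tOf p T τ) = selfSimilarRadius p T 0 * Real.exp (-τ) := by
  have exp_eq : Real.exp (-((p : ℝ) + 1) * τ) ^ (1 / ((p : ℝ) + 1)) = Real.exp (-τ) := by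
    rw [← Real.exp_mul]
    congr 1
    field_simp
  rw [selfSimilarRadius, selfSimilarRadius, sub_tOf, sub_zero, ← mul_assoc,
    Real.mul_rpow (by positivity) (Real.exp_nonneg _), exp_eq]

lemma selfSimilarRadius_tOf_pow {p : ℕ} (hp : p ≠ 0) {T : ℝ} (hT : 0 ≤ T) (τ : ℝ) :
    selfSimilarRadius p T (tOf p T τ) ^ (6 * p - 2)
      = selfSimilarRadius p T 0 ^ (6 * p - 2) * Real.exp (-(6 * (p : ℝ) - 2) * τ) := by
  rw [selfSimilarRadius_tOf p hT, mul_pow, ← Real.exp_nat_mul, Nat.cast_sub (by omega)]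
  push_cast
  ring_nf

lemma periodMean_ktilde (p : ℕ) {T τ : ℝ} (hT : tOf p T τ ≤ T) (k : ℝ → ℝ → ℝ) :
    periodMean (fun θ => ktilde p T k θ τ)
      = selfSimilarRadius p T (tOf p T τ) * periodMean fun θ => k θ (tOf p T τ) := by
  simp only [ktilde, ← Real.mul_rpow (show 0 ≤ ((p : ℝ) + 1) / p by positivity) (sub_nonneg.2 hT),
    periodMean, intervalIntegral.integral_const_mul, selfSimilarRadius]
  ring

lemma abs_mul_sub_one_le {ρ l m : ℝ} (hl : 0 < l) (hρ : |ρ / l - 1| ≤ 1 / 2) :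
    |l * m - 1| ≤ 2 * (|ρ * m - 1| + |ρ / l - 1|) := by
  have half_le : 1 / 2 ≤ ρ / l := by linarith [(abs_le.1 hρ).1]
  have inv_le := inv_le_two_of_abs_sub_one_le hρ
  have ratio_pos : 0 < ρ / l := by linarith
  have split : l * m - 1 = (ρ / l)⁻¹ * (ρ * m - 1 - (ρ / l - 1)) := by
    have : ρ ≠ 0 := by
      rintro rfl
      simp at ratio_pos
    field_simp
    ring
  rw [split, abs_mul, abs_of_pos (inv_pos.2 ratio_pos)]
  gcongr
  exact abs_sub _ _

end Rescaling

section Convergence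

namespace IsPCSF

variable {p : ℕ} {T : ℝ} {k : ℝ → ℝ → ℝ} {ψ : ℝ → ℝ}

lemma perturbConst_mul_relOsc_radiusOf_le (H : IsPCSF p T k ψ) (hp : p ≠ 0)
    (hψ : relOsc ψ ≤ 1 / (65 * perturbConst p)) :
    ∀ t ∈ Ico 0 T, perturbConst p * relOsc (radiusOf k t) ≤ 1 / 8 := by
  have one_le := one_le_perturbConst p
  have relOsc_ψ_le : 65 * perturbConst p * relOsc ψ ≤ 1 := (le_div_iff₀' (by positivity)).1 hψ
  have relOsc_zero_le : relOsc (radiusOf k 0) ≤ 8 * relOsc ψ :=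
    H.relOsc_radiusOf_zero_le (by nlinarith)
  have initial_small : perturbConst p * relOsc (radiusOf k 0) < 1 / 8 := by
    linarith [mul_le_mul_of_nonneg_left relOsc_zero_le (zero_le_one.trans one_le)]
  exact fun t ht =>
    (((H.isRadiusFlow hp).isNearCircularSystem hp).relSize_small initial_small t ht).le

lemma exists_abs_mul_periodMean_sub_one_le (H : IsPCSF p T k ψ) (hp : p ≠ 0) (hT : 0 < T)
    (hψ : relOsc ψ ≤ 1 / (65 * perturbConst p)) :
    ∃ D, ∀ t ∈ Ico 0 T, |selfSimilarRadius p T t * periodMean (fun θ => k θ t) - 1|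
      ≤ D * selfSimilarRadius p T t ^ (6 * p - 2) := by
  have S := (H.isRadiusFlow hp).isNearCircularSystem hp
  have small := H.perturbConst_mul_relOsc_radiusOf_le hp hψ
  have relOsc_le (t : ℝ) (ht : t ∈ Ico 0 T) : relOsc (radiusOf k t) ≤ 1 / 2 :=
    relOsc_le_of_perturbConst_mul_le (small t ht)
  have mean_tendsto := H.tendsto_periodMean_radiusOf hp hT relOsc_le
  obtain ⟨D, hD⟩ := S.exists_decay_rates small mean_tendsto
  refine ⟨6 * D, fun t ht => ?_⟩
  obtain ⟨relOsc_sq_le, radius_le⟩ := hD t ht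
  have hr := (H.isRadiusFlow hp).isConvexRadius t ht
  have inverse_mean : |periodMean (radiusOf k t) * periodMean (fun θ => k θ t) - 1|
      ≤ 2 * relOsc (radiusOf k t) ^ 2 := by
    simpa only [radiusOf, inv_inv] using abs_mul_periodMean_inv_sub_one_le
      (hr.contDiff.of_le one_le_two) hr.periodic hr.pos (relOsc_le t ht)
  have := abs_mul_sub_one_le (m := periodMean fun θ => k θ t) (selfSimilarRadius_pos hp ht.2)
    (S.abs_mean_div_selfSimilarRadius_sub_one_le_half small mean_tendsto ht)
  change relOsc (radiusOf k t) ^ 2 ≤ _ at relOsc_sq_le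
  linarith

end IsPCSF

end Convergence

/-- There is `c_p > 0` depending only on `p` such that if `ψ̂(0) ≥ c_p ‖ψ‖₂`,
then there is `C > 0` with `|(1/2π)∫₀^{2π} k̃(θ,τ) dθ - 1| ≤ C e^{-(6p-2)τ}` for all
sufficiently large `τ`. -/
theorem statement15 (p : ℕ) (hp : 1 ≤ p) :
    ∃ cp > (0:ℝ), ∀ (T : ℝ), 0 < T → ∀ (k : ℝ → ℝ → ℝ) (ψ : ℝ → ℝ),
      IsPCSF p T k ψ →
      cp * seminorm2 ψ ≤ (fCoeff ψ 0).re →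
      ∃ C > (0:ℝ), ∃ τ₀ : ℝ, ∀ τ : ℝ, τ₀ ≤ τ →
        |(1 / (2 * Real.pi)) * (∫ θ in (0:ℝ)..(2 * Real.pi), ktilde p T k θ τ) - 1|
          ≤ C * Real.exp (-(6 * (p : ℝ) - 2) * τ) := by
  have hp' : p ≠ 0 := Nat.one_le_iff_ne_zero.1 hp
  have := one_le_perturbConst p
  obtain ⟨c, c_pos, relOsc_le⟩ := exists_relOsc_le_of_mul_seminorm2_le
    (δ := 1 / (65 * perturbConst p)) (by positivity)
  refine ⟨c, c_pos, fun T hT k ψ H hψ => ?_⟩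
  have ⟨_, _, _, _, _, smooth, pos, periodic, _, _⟩ := H
  rw [fCoeff_zero_re] at hψ
  have relOsc_ψ_le := relOsc_le ψ (smooth.of_le (WithTop.coe_le_coe.2 le_top)) periodic
    (periodMean_pos smooth.continuous pos) hψ
  obtain ⟨D, hD⟩ := H.exists_abs_mul_periodMean_sub_one_le hp' hT relOsc_ψ_le
  refine ⟨|D * selfSimilarRadius p T 0 ^ (6 * p - 2)| + 1, by positivity, 0, fun τ hτ => ?_⟩
  have ht := tOf_mem_Ico p hT hτ
  change |periodMean (fun θ => ktilde p T k θ τ) - 1| ≤ _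
  rw [periodMean_ktilde p ht.2.le]
  refine (hD _ ht).trans ?_
  rw [selfSimilarRadius_tOf_pow hp' hT.le, ← mul_assoc]
  gcongr
  exact (le_abs_self _).trans (le_add_of_nonneg_right zero_le_one)
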